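/- arXiv:2106.04838 — 6 statements merged into one kernel-verified Lean document; each statement's English description precedes it below -/
import Mathlib

section
/- Let g : ℝ³ → ℝ be a C^∞ function with g > 0 everywhere, and let X : ℝ³ → ℝ³ be the vector field X(x,y,λ) = ((λ − 3y²)/g(x,y,λ), −2x/g(x,y,λ), 0) (the Hamiltonian vector field of H(x,y,λ) = x² − y³ + λy with respect to the symplectic form g·dx∧dy in each plane λ = const). Let W ⊆ ℝ³ be an open neighbourhood of the origin and μ = (μ¹, μ², μ³) : W → ℝ³ a C^∞ map such that: (i) μ³(x,y,λ) = λ and H(μ(x,y,λ)) = H(x,y,λ) for all (x,y,λ) ∈ W; (ii) μ(p) = p for every p ∈ W with x = 0 and λ = 3y²; (iii) Dμ_p(X(p)) = X(μ(p)) for all p ∈ W; (iv) (μ²(0,y,λ) − y)(3y² − λ) ≥ 0 whenever (0,y,λ) ∈ W; (v) μ¹(0,y,λ) ≠ 0 whenever (0,y,λ) ∈ W and λ ≠ 3y²; (vi) for every (0,y,λ) ∈ W with λ ≠ 3y² and every t strictly between y and μ²(0,y,λ), one has t³ − λt − y³ + λy > 0. Then there exist an open neighbourhood V ⊆ W of the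 origin and a C^∞ function û : V → ℝ such that: û(p) = û(q) whenever p and q lie in the same connected component of a common level set {r ∈ V : H(r) = H(p), r₃ = p₃}; and for every p ∈ V there is a differentiable curve γ : ℝ → ℝ³ with γ(0) = p, γ'(s) = X(γ(s)) for all s between 0 and û(p), and γ(û(p)) = μ(p). (In other words, μ is the time-1 map of the smooth Hamiltonian vector field û·X.) -/
open Set

noncomputable section

/-- The standard parabolic Hamiltonian `H(x,y,λ) = x² − y³ + λy`. -/
def Hpar : ℝ × ℝ × ℝ → ℝ := fun p => p.1 ^ 2 - p.2.1 ^ 3 + p.2.2 * p.2.1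

/-- The Hamiltonian vector field of `H` with respect to `g·dx∧dy` in each plane
`λ = const`: `X(x,y,λ) = ((λ − 3y²)/g, −2x/g, 0)`. -/
noncomputable def Xpar (g : ℝ × ℝ × ℝ → ℝ) : ℝ × ℝ × ℝ → ℝ × ℝ × ℝ :=
  fun p => ((p.2.2 - 3 * p.2.1 ^ 2) / g p, -2 * p.1 / g p, 0)

/-- tube-lemma bound -/
lemma tube_bound {E G : Type} [NormedAddCommGroup E] [NormedSpace ℝ E] [NormedAddCommGroup G]
    (F : ℝ × E → G) (O : Set (ℝ × E)) (hO : IsOpen O) (hF : ContinuousOn F O)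
    (p : E) (hp : ∀ t ∈ Icc (0:ℝ) 1, (t, p) ∈ O) :
    ∃ r > 0, ∃ M : ℝ, ∀ t ∈ Icc (0:ℝ) 1, ∀ q ∈ Metric.ball p r, (t, q) ∈ O ∧ ‖F (t, q)‖ ≤ M := by
  have hK : IsCompact (Icc (0:ℝ) 1 ×ˢ ({p} : Set E)) := isCompact_Icc.prod isCompact_singleton
  have hKO : Icc (0:ℝ) 1 ×ˢ ({p} : Set E) ⊆ O := by
    rintro ⟨t, q⟩ ⟨ht, hq⟩
    obtain rfl : q = p := hq
    exact hp t ht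
  obtain ⟨M, hM⟩ := hK.exists_bound_of_continuousOn (hF.mono hKO)
  have hO2 : IsOpen (O ∩ F ⁻¹' (Metric.ball 0 (M + 1))) := hF.isOpen_inter_preimage hO Metric.isOpen_ball
  have hsub : Icc (0:ℝ) 1 ×ˢ ({p} : Set E) ⊆ O ∩ F ⁻¹' (Metric.ball 0 (M + 1)) := by
    intro z hz
    refine ⟨hKO hz, ?_⟩
    have := hM z hz
    simp only [mem_preimage, mem_ball_zero_iff]
    linarith
  obtain ⟨u, v, hu, hv, hsu, hsv, huv⟩ :=
    generalized_tube_lemma isCompact_Icc isCompact_singleton hO2 hsub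
  obtain ⟨r, hr, hrv⟩ := Metric.isOpen_iff.1 hv p (hsv rfl)
  refine ⟨r, hr, M + 1, fun t ht q hq => ?_⟩
  have := huv (mk_mem_prod (hsu ht) (hrv hq))
  refine ⟨this.1, ?_⟩
  have h2 := this.2
  simp only [mem_preimage, mem_ball_zero_iff] at h2
  exact h2.le

lemma param_contOn {E G : Type} [NormedAddCommGroup E] [NormedSpace ℝ E] [NormedAddCommGroup G]
    (F : ℝ × E → G) (O : Set (ℝ × E)) (hF : ContinuousOn F O)
    (p : E) (hp : ∀ t ∈ Icc (0:ℝ) 1, (t, p) ∈ O) :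
    ContinuousOn (fun t => F (t, p)) (Icc (0:ℝ) 1) :=
  hF.comp (by fun_prop) hp

lemma param_int {E G : Type} [NormedAddCommGroup E] [NormedSpace ℝ E] [NormedAddCommGroup G]
    (F : ℝ × E → G) (O : Set (ℝ × E)) (hF : ContinuousOn F O)
    (p : E) (hp : ∀ t ∈ Icc (0:ℝ) 1, (t, p) ∈ O) :
    IntervalIntegrable (fun t => F (t, p)) MeasureTheory.volume 0 1 := by
  apply ContinuousOn.intervalIntegrable
  rw [uIcc_of_le zero_le_one]
  exact param_contOn F O hF p hp

lemma param_integral_nat {E : Type} [NormedAddCommGroup E] [NormedSpace ℝ E]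
    (O : Set (ℝ × E)) (hO : IsOpen O) (U : Set E) (hU : IsOpen U)
    (hOU : ∀ p ∈ U, ∀ t ∈ Icc (0:ℝ) 1, (t, p) ∈ O) (n : ℕ) :
    ∀ {G : Type} [NormedAddCommGroup G] [NormedSpace ℝ G] (F : ℝ × E → G), ContDiffOn ℝ n F O →
      ContDiffOn ℝ n (fun p => ∫ t in (0:ℝ)..1, F (t, p)) U := by
  have hI : Set.uIoc (0:ℝ) 1 ⊆ Icc 0 1 := by
    rw [uIoc_of_le zero_le_one]; exact Ioc_subset_Icc_self
  induction n with
  | zero =>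
    intro G _ _ F hF
    simp only [Nat.cast_zero, contDiffOn_zero] at hF ⊢
    intro p hp
    apply ContinuousAt.continuousWithinAt
    obtain ⟨r, hr, M, hM⟩ := tube_bound F O hO hF p (hOU p hp)
    apply intervalIntegral.continuousAt_of_dominated_interval (bound := fun _ => M)
    · filter_upwards [hU.mem_nhds hp] with q hq
      exact (param_int F O hF q (hOU q hq)).def'.aestronglyMeasurable
    · filter_upwards [Metric.ball_mem_nhds p hr] with q hq
      exact Filter.Eventually.of_forall fun t ht => (hM t (hI ht) q hq).2
    · simp
    · refine Filter.Eventually.of_forall fun t ht => ?_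
      have := (hF.continuousAt (hO.mem_nhds (hOU p hp t (hI ht))))
      exact ContinuousAt.comp (f := fun q : E => (t, q)) this (by fun_prop)
  | succ n ih =>
    intro G _ _ F hF
    have hcF := hF.continuousOn
    have hF' : ContDiffOn ℝ n (fun z => (fderiv ℝ F z).comp (ContinuousLinearMap.inr ℝ ℝ E)) O := by
      have h1 : ContDiffOn ℝ n (fderiv ℝ F) O := hF.fderiv_of_isOpen hO (by norm_cast)
      exact h1.clm_comp contDiffOn_const
    have hcF' := hF'.continuousOn
    have key : ∀ p ∈ U, HasFDerivAt (fun p => ∫ t in (0:ℝ)..1, F (t, p))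
        (∫ t in (0:ℝ)..1, (fderiv ℝ F (t, p)).comp (ContinuousLinearMap.inr ℝ ℝ E)) p := by
      intro p hp
      obtain ⟨r, hr, M, hM⟩ := tube_bound _ O hO hcF' p (hOU p hp)
      have := intervalIntegral.hasFDerivAt_integral_of_dominated_of_fderiv_le
        (F := fun q t => F (t, q)) (x₀ := p) (a := 0) (b := 1) (μ := MeasureTheory.volume)
        (F' := fun q t => (fderiv ℝ F (t, q)).comp (ContinuousLinearMap.inr ℝ ℝ E))
        (bound := fun _ => M) (s := Metric.ball p r) (𝕜 := ℝ) (Metric.ball_mem_nhds p hr) ?_ ?_ ?_ ?_ ?_ ?_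
      · exact this
      · filter_upwards [hU.mem_nhds hp] with q hq
        exact (param_int F O hcF q (hOU q hq)).def'.aestronglyMeasurable
      · exact param_int F O hcF p (hOU p hp)
      · exact (param_int _ O hcF' p (hOU p hp)).def'.aestronglyMeasurable
      · exact Filter.Eventually.of_forall fun t ht q hq => (hM t (hI ht) q hq).2
      · simp
      · refine Filter.Eventually.of_forall fun t ht q hq => ?_
        have hd : HasFDerivAt F (fderiv ℝ F (t, q)) (t, q) :=
          ((hF.differentiableOn (by norm_cast)).differentiableAt
            (hO.mem_nhds (hM t (hI ht) q hq).1)).hasFDerivAt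
        have h2 : HasFDerivAt (fun q : E => (t, q)) (ContinuousLinearMap.inr ℝ ℝ E) q :=
          hasFDerivAt_prodMk_right t q
        exact hd.comp q h2
    push_cast
    rw [contDiffOn_succ_iff_fderiv_of_isOpen hU]
    refine ⟨fun p hp => (key p hp).differentiableAt.differentiableWithinAt, by simp, ?_⟩
    refine (ih _ hF').congr fun p hp => ?_
    exact (key p hp).fderiv

lemma param_integral {E G : Type} [NormedAddCommGroup E] [NormedSpace ℝ E]
    [NormedAddCommGroup G] [NormedSpace ℝ G]
    (O : Set (ℝ × E)) (hO : IsOpen O) (U : Set E) (hU : IsOpen U)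
    (hOU : ∀ p ∈ U, ∀ t ∈ Icc (0:ℝ) 1, (t, p) ∈ O) (F : ℝ × E → G)
    (hF : ContDiffOn ℝ (⊤ : ℕ∞) F O) :
    ContDiffOn ℝ (⊤ : ℕ∞) (fun p => ∫ t in (0:ℝ)..1, F (t, p)) U := by
  rw [contDiffOn_infty] at hF ⊢
  exact fun n => param_integral_nat O hO U hU hOU n F (hF n)

def cc (z : ℝ × ℝ × ℝ × ℝ) : ℝ :=
  z.2.2.1 - 2 * z.1 * z.2.1 - z.1 ^ 2 * z.2.2.2 + z.1 ^ 2 * z.2.2.1 ^ 2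
def dd (z : ℝ × ℝ × ℝ × ℝ) : ℝ := (1 - z.1 ^ 2 * z.2.2.1) ^ 2 - 4 * z.1 ^ 2 * cc z
def zz (z : ℝ × ℝ × ℝ × ℝ) : ℝ := 2 * cc z / ((1 - z.1 ^ 2 * z.2.2.1) + √(dd z))
def xx (z : ℝ × ℝ × ℝ × ℝ) : ℝ :=
  z.2.1 + z.1 * (z.2.2.2 - zz z ^ 2 - zz z * z.2.2.1 - z.2.2.1 ^ 2)
def Psi (z : ℝ × ℝ × ℝ × ℝ) : ℝ × ℝ × ℝ := (xx z, zz z, z.2.2.2)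
def OO : Set (ℝ × ℝ × ℝ × ℝ) := {z | 0 < dd z ∧ 0 < 1 - z.1 ^ 2 * z.2.2.1}

lemma contDiff_cc : ContDiff ℝ (⊤ : ℕ∞) cc := by unfold cc; fun_prop
lemma contDiff_dd : ContDiff ℝ (⊤ : ℕ∞) dd := by
  unfold dd; have := contDiff_cc; fun_prop

lemma isOpen_OO : IsOpen OO := by
  apply IsOpen.inter
  · exact isOpen_lt continuous_const contDiff_dd.continuous
  · exact isOpen_lt (f := fun _ => (0:ℝ)) (g := fun z : ℝ × ℝ × ℝ × ℝ => 1 - z.1 ^ 2 * z.2.2.1) continuous_const (by fun_prop)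

lemma contDiffOn_sqrt_dd : ContDiffOn ℝ (⊤ : ℕ∞) (fun z => √(dd z)) OO :=
  contDiff_dd.contDiffOn.sqrt fun _ hz => hz.1.ne'

lemma contDiffOn_zz : ContDiffOn ℝ (⊤ : ℕ∞) zz OO := by
  have h1 := contDiffOn_sqrt_dd
  have h2 : ContDiffOn ℝ (⊤ : ℕ∞) cc OO := contDiff_cc.contDiffOn
  unfold zz
  apply ContDiffOn.div
  · fun_prop
  · fun_prop
  · intro z hz
    have := Real.sqrt_nonneg (dd z)
    have := hz.2
    positivity

lemma contDiffOn_xx : ContDiffOn ℝ (⊤ : ℕ∞) xx OO := by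
  have h1 := contDiffOn_zz
  unfold xx
  fun_prop

lemma contDiffOn_Psi : ContDiffOn ℝ (⊤ : ℕ∞) Psi OO := by
  have h1 := contDiffOn_zz
  have h2 := contDiffOn_xx
  unfold Psi
  fun_prop

lemma quad_zz {z : ℝ × ℝ × ℝ × ℝ} (hz : z ∈ OO) :
    √(dd z) = 1 - z.1 ^ 2 * (2 * zz z + z.2.2.1) ∧ zz z = z.2.2.1 - z.1 * (xx z + z.2.1) := by
  have hs := Real.sq_sqrt hz.1.le
  have hp := Real.sqrt_pos.2 hz.1
  have hz2 := hz.2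
  set s := √(dd z) with hs'
  have hden : (1 - z.1 ^ 2 * z.2.2.1) + s ≠ 0 := by positivity
  have hzz : zz z * ((1 - z.1 ^ 2 * z.2.2.1) + s) = 2 * cc z := by
    unfold zz; rw [← hs']; field_simp
  have e1 : s = 1 - z.1 ^ 2 * (2 * zz z + z.2.2.1) := by
    have : (s - (1 - z.1 ^ 2 * (2 * zz z + z.2.2.1))) * ((1 - z.1 ^ 2 * z.2.2.1) + s) = 0 := by
      unfold dd at hs
      linear_combination hs + 2 * z.1 ^ 2 * hzz
    rcases mul_eq_zero.1 this with h | h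
    · linarith
    · exact absurd h hden
  refine ⟨e1, ?_⟩
  rw [e1] at hzz
  unfold xx
  unfold cc at hzz
  linear_combination hzz / 2

lemma Psi_unique {k x y l x1 y1 : ℝ} (h1 : x1 - x = k * (l - y1 ^ 2 - y1 * y - y ^ 2))
    (h2 : y1 - y = -(k * (x1 + x))) (h3 : 0 < 1 - k ^ 2 * (2 * y1 + y)) (h4 : 0 < 1 - k ^ 2 * y) :
    Psi (k, x, y, l) = (x1, y1, l) := by
  have hc : cc (k, x, y, l) = y1 - k ^ 2 * y1 ^ 2 - k ^ 2 * y1 * y := by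
    simp only [cc]; linear_combination -h2 + k * h1
  have hd : dd (k, x, y, l) = (1 - k ^ 2 * (2 * y1 + y)) ^ 2 := by
    unfold dd; rw [hc]; ring
  have hsq : √(dd (k, x, y, l)) = 1 - k ^ 2 * (2 * y1 + y) := by
    rw [hd, Real.sqrt_sq h3.le]
  have hz : zz (k, x, y, l) = y1 := by
    unfold zz; rw [hc, hsq]
    simp only
    rw [div_eq_iff (by positivity)]
    ring
  unfold Psi
  refine Prod.ext ?_ (Prod.ext hz rfl)
  simp only [xx, hz]
  linarith

lemma hasDerivAt_Psi {g : ℝ × ℝ × ℝ → ℝ} (hgpos : ∀ p, 0 < g p) {k : ℝ} {p : ℝ × ℝ × ℝ}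
    (hz : (k, p) ∈ OO) :
    HasDerivAt (fun t => Psi (t, p)) ((g (Psi (k, p)) / √(dd (k, p))) • Xpar g (Psi (k, p))) k := by
  have hO : OO ∈ nhds (k, p) := isOpen_OO.mem_nhds hz
  have hline : HasDerivAt (fun t : ℝ => (t, p)) ((1 : ℝ), (0 : ℝ × ℝ × ℝ)) k :=
    (hasDerivAt_id k).prodMk (hasDerivAt_const k p)
  have hdz : DifferentiableAt ℝ (fun t => zz (t, p)) k :=
    DifferentiableAt.comp (g := zz) (f := fun t : ℝ => (t, p)) k ((contDiffOn_zz.differentiableOn (by simp)).differentiableAt hO)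
      hline.differentiableAt
  have hdx : DifferentiableAt ℝ (fun t => xx (t, p)) k :=
    DifferentiableAt.comp (g := xx) (f := fun t : ℝ => (t, p)) k ((contDiffOn_xx.differentiableOn (by simp)).differentiableAt hO)
      hline.differentiableAt
  obtain ⟨z', hz'⟩ : ∃ z', HasDerivAt (fun t => zz (t, p)) z' k := ⟨_, hdz.hasDerivAt⟩
  obtain ⟨x', hx'⟩ : ∃ x', HasDerivAt (fun t => xx (t, p)) x' k := ⟨_, hdx.hasDerivAt⟩
  have hev : ∀ᶠ t in nhds k, (t, p) ∈ OO := hline.continuousAt.preimage_mem_nhds hO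
  have ex : x' = (p.2.2 - zz (k, p) ^ 2 - zz (k, p) * p.2.1 - p.2.1 ^ 2)
      + k * (- (2 * zz (k, p) * z') - z' * p.2.1) := by
    apply hx'.unique
    have : HasDerivAt (fun t => p.1 + t * (p.2.2 - zz (t, p) ^ 2 - zz (t, p) * p.2.1 - p.2.1 ^ 2))
      _ k := ((hasDerivAt_id k).mul ((((hz'.pow 2).const_sub p.2.2).sub (hz'.mul_const p.2.1)).sub_const (p.2.1^2))).const_add p.1
    refine this.congr_deriv ?_
    simp
  have ez : z' = - (xx (k, p) + p.1) - k * x' := by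
    apply hz'.unique
    have : HasDerivAt (fun t => p.2.1 - t * (xx (t, p) + p.1))
      _ k := ((hasDerivAt_id k).mul (hx'.add_const p.1)).const_sub p.2.1
    have h3 := this.congr_of_eventuallyEq (f₁ := fun t => zz (t, p)) (by
      filter_upwards [hev] with t ht
      exact (quad_zz ht).2)
    refine h3.congr_deriv ?_
    simp; ring
  obtain ⟨q1, q2⟩ := quad_zz hz
  have hsp := Real.sqrt_pos.2 hz.1
  have hgp := (hgpos (Psi (k, p)))
  have hx1 : xx (k, p) = p.1 + k * (p.2.2 - zz (k, p) ^ 2 - zz (k, p) * p.2.1 - p.2.1 ^ 2) := rfl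
  have hfin := hx'.prodMk (hz'.prodMk (hasDerivAt_const k p.2.2))
  refine HasDerivAt.congr_deriv (f := fun t => Psi (t, p)) hfin (Eq.symm ?_)
  refine Prod.ext ?_ (Prod.ext ?_ ?_)
  · simp only [Xpar, Prod.smul_fst, smul_eq_mul]
    field_simp
    simp only [Psi]
    rw [q1]
    simp only at q2 ⊢
    linear_combination -ex + (k * (2 * zz (k,p) + p.2.1)) * ez - (2 * zz (k,p) + p.2.1) * q2
  · simp only [Xpar, Prod.smul_fst, Prod.smul_snd, smul_eq_mul]
    field_simp
    simp only [Psi]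
    rw [q1]
    simp only at q2 ⊢
    linear_combination -ez + k * ex - hx1
  · simp [Xpar]

lemma dens {φ : ℝ → ℝ} {s : ℝ} (hφ : ContinuousAt φ s) (h : ∀ᶠ t in nhds s, t * φ t = 0) :
    φ s = 0 := by
  have h1 : ∀ᶠ t in nhdsWithin s {s}ᶜ, t ≠ 0 := by
    by_cases hs : s = 0
    · subst hs; exact self_mem_nhdsWithin
    · exact nhdsWithin_le_nhds (isOpen_ne.mem_nhds hs)
  have h2 : ∀ᶠ t in nhdsWithin s {s}ᶜ, φ t = 0 := by
    filter_upwards [h1, h.filter_mono nhdsWithin_le_nhds] with t h1 h2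
    exact (mul_eq_zero.1 h2).resolve_left h1
  have h3 : Filter.Tendsto φ (nhdsWithin s {s}ᶜ) (nhds (φ s)) := hφ.tendsto.mono_left nhdsWithin_le_nhds
  have h4 : Filter.Tendsto φ (nhdsWithin s {s}ᶜ) (nhds 0) := by
    refine tendsto_const_nhds.congr' ?_
    filter_upwards [h2] with t ht using ht.symm
  exact tendsto_nhds_unique h3 h4

lemma mem_ball3 {x y l r : ℝ} : (x, y, l) ∈ Metric.ball (0 : ℝ × ℝ × ℝ) r ↔
    |x| < r ∧ |y| < r ∧ |l| < r := by
  simp [Prod.norm_def]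

lemma hadamard (h : ℝ × ℝ × ℝ → ℝ) (r : ℝ)
    (hh : ContDiffOn ℝ (⊤ : ℕ∞) h (Metric.ball 0 r))
    (h0 : ∀ q ∈ Metric.ball (0 : ℝ × ℝ × ℝ) r, q.1 = 0 → h q = 0) :
    ∃ k : ℝ × ℝ × ℝ → ℝ, ContDiffOn ℝ (⊤ : ℕ∞) k (Metric.ball 0 r) ∧
      ∀ q ∈ Metric.ball (0 : ℝ × ℝ × ℝ) r, h q = q.1 * k q := by
  let m : ℝ × ℝ × ℝ × ℝ → ℝ × ℝ × ℝ := fun z => (z.1 * z.2.1, z.2.2.1, z.2.2.2)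
  have hm : ContDiff ℝ (⊤ : ℕ∞) m := by unfold m; fun_prop
  let O : Set (ℝ × ℝ × ℝ × ℝ) := m ⁻¹' (Metric.ball 0 r)
  have hO : IsOpen O := Metric.isOpen_ball.preimage hm.continuous
  have hOU : ∀ p ∈ Metric.ball (0 : ℝ × ℝ × ℝ) r, ∀ t ∈ Icc (0:ℝ) 1, (t, p) ∈ O := by
    rintro ⟨x, y, l⟩ hp t ht
    rw [mem_ball3] at hp
    change (t * x, y, l) ∈ Metric.ball 0 r
    rw [mem_ball3]
    refine ⟨?_, hp.2⟩
    rw [abs_mul, abs_of_nonneg ht.1]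
    have := abs_nonneg x
    nlinarith [ht.2, hp.1]
  let F : ℝ × ℝ × ℝ × ℝ → ℝ := fun z => fderiv ℝ h (m z) (1, 0, 0)
  have hF : ContDiffOn ℝ (⊤ : ℕ∞) F O := by
    have h1 : ContDiffOn ℝ (⊤ : ℕ∞) (fderiv ℝ h) (Metric.ball 0 r) :=
      hh.fderiv_of_isOpen Metric.isOpen_ball (by norm_cast)
    exact (h1.comp hm.contDiffOn (fun z hz => hz)).clm_apply contDiffOn_const
  refine ⟨fun p => ∫ t in (0:ℝ)..1, F (t, p), param_integral O hO _ Metric.isOpen_ball hOU F hF, ?_⟩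
  intro q hq
  have hder : ∀ t ∈ uIcc (0:ℝ) 1, HasDerivAt (fun t => h (m (t, q))) (q.1 * F (t, q)) t := by
    intro t ht
    rw [uIcc_of_le zero_le_one] at ht
    have hd : HasFDerivAt h (fderiv ℝ h (m (t, q))) (m (t, q)) :=
      ((hh.differentiableOn (by simp)).differentiableAt
        (Metric.isOpen_ball.mem_nhds (hOU q hq t ht))).hasFDerivAt
    have hl : HasDerivAt (fun t => m (t, q)) (q.1 * 1, 0, 0) t := by
      have h1 : HasDerivAt (fun t : ℝ => t * q.1) (q.1 * 1) t := by
        simpa using (hasDerivAt_id t).mul_const q.1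
      exact h1.prodMk ((hasDerivAt_const t q.2.1).prodMk (hasDerivAt_const t q.2.2))
    have := hd.comp_hasDerivAt t hl
    refine this.congr_deriv ?_
    have e : ((q.1 * 1, 0, 0) : ℝ × ℝ × ℝ) = q.1 • ((1, 0, 0) : ℝ × ℝ × ℝ) := by simp
    rw [e, map_smul, smul_eq_mul]
  have hint := (param_int F O hF.continuousOn q (hOU q hq)).const_mul q.1
  have := intervalIntegral.integral_eq_sub_of_hasDerivAt hder hint
  rw [intervalIntegral.integral_const_mul] at this
  rw [this]
  have e1 : m (1, q) = q := by simp [m]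
  have e0 : h (m (0, q)) = 0 := h0 _ (hOU q hq 0 (by simp)) (by simp [m])
  rw [e1, e0, sub_zero]

lemma dmu_one (g : ℝ × ℝ × ℝ → ℝ) (hg : ContDiff ℝ (⊤ : ℕ∞) g) (hgpos : ∀ p, 0 < g p)
    (W : Set (ℝ × ℝ × ℝ)) (hW : IsOpen W) (hW0 : (0 : ℝ × ℝ × ℝ) ∈ W)
    (μ : ℝ × ℝ × ℝ → ℝ × ℝ × ℝ) (hμ : ContDiffOn ℝ (⊤ : ℕ∞) μ W)
    (hμlam : ∀ p ∈ W, (μ p).2.2 = p.2.2)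
    (hμ0 : μ 0 = 0)
    (hcomm : ∀ p ∈ W, fderiv ℝ μ p (Xpar g p) = Xpar g (μ p)) :
    (fderiv ℝ μ 0 (1, 0, 0)).1 = 1 := by
  let L : ℝ → ℝ × ℝ × ℝ := fun l => (0, 0, l)
  have hL : Continuous L := by unfold L; fun_prop
  have hL0 : L 0 = 0 := rfl
  have hWn : W ∈ nhds (L 0) := hW.mem_nhds hW0
  have hfd : ContinuousAt (fun l => (fderiv ℝ μ (L l) (1, 0, 0)).1) 0 := by
    have h1 : ContDiffOn ℝ (⊤ : ℕ∞) (fderiv ℝ μ) W := hμ.fderiv_of_isOpen hW (by norm_cast)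
    have h2 : ContinuousAt (fun l => fderiv ℝ μ (L l)) 0 :=
      ContinuousAt.comp (g := fderiv ℝ μ) (f := L) (h1.continuousOn.continuousAt hWn) hL.continuousAt
    exact (h2.clm_apply continuousAt_const).fst
  have hμd : DifferentiableAt ℝ μ (L 0) := (hμ.differentiableOn (by simp)).differentiableAt hWn
  have hLd : DifferentiableAt ℝ L 0 := by unfold L; fun_prop
  have hmd : DifferentiableAt ℝ (fun l => (μ (L l)).2.1) 0 :=
    (DifferentiableAt.comp (g := μ) (f := L) 0 hμd hLd).snd.fst
  obtain ⟨m', hm'⟩ : ∃ m', HasDerivAt (fun l => (μ (L l)).2.1) m' 0 := ⟨_, hmd.hasDerivAt⟩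
  have hm0 : (μ (L 0)).2.1 = 0 := by rw [hL0, hμ0]; rfl
  have hsl := hasDerivAt_iff_tendsto_slope_zero.1 hm'
  simp only [zero_add, hm0, sub_zero, smul_eq_mul] at hsl
  have hc : Filter.Tendsto (fun l => (μ (L l)).2.1) (nhdsWithin 0 {0}ᶜ) (nhds 0) := by
    have := hmd.continuousAt.tendsto
    rw [hm0] at this
    exact this.mono_left nhdsWithin_le_nhds
  have hμc : ContinuousAt (fun l => μ (L l)) 0 :=
    ContinuousAt.comp (g := μ) (f := L) hμd.continuousAt hL.continuousAt
  have hgq : ContinuousAt (fun l => g (L l) / g (μ (L l))) 0 := by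
    apply ContinuousAt.div
    · exact (hg.continuous.comp hL).continuousAt
    · exact ContinuousAt.comp (g := g) (f := fun l => μ (L l)) hg.continuous.continuousAt hμc
    · exact (hgpos _).ne'
  have hgt : Filter.Tendsto (fun l => g (L l) / g (μ (L l))) (nhdsWithin 0 {0}ᶜ) (nhds 1) := by
    have := hgq.tendsto
    rw [hL0, hμ0, div_self (hgpos _).ne'] at this
    exact this.mono_left nhdsWithin_le_nhds
  have hlim : Filter.Tendsto (fun l => g (L l) / g (μ (L l)) *
      (1 - 3 * (((μ (L l)).2.1) * (l⁻¹ * (μ (L l)).2.1)))) (nhdsWithin 0 {0}ᶜ)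
      (nhds (1 * (1 - 3 * (0 * m')))) :=
    hgt.mul (((hc.mul hsl).const_mul 3).const_sub 1)
  have hlim2 : Filter.Tendsto (fun l => (fderiv ℝ μ (L l) (1, 0, 0)).1) (nhdsWithin 0 {0}ᶜ)
      (nhds (1 * (1 - 3 * (0 * m')))) := by
    refine hlim.congr' ?_
    have hev : ∀ᶠ l in nhdsWithin (0:ℝ) {0}ᶜ, L l ∈ W :=
      nhdsWithin_le_nhds (hL.continuousAt.preimage_mem_nhds hWn)
    filter_upwards [hev, self_mem_nhdsWithin] with l hl hl0
    have hl0' : l ≠ 0 := hl0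
    have h1 := hcomm _ hl
    have e : Xpar g (L l) = (l / g (L l)) • ((1, 0, 0) : ℝ × ℝ × ℝ) := by
      simp [Xpar, L]
    rw [e, map_smul] at h1
    have h2 := congrArg Prod.fst h1
    simp only [Xpar, Prod.smul_fst, smul_eq_mul, hμlam _ hl] at h2
    have h3 : (L l).2.2 = l := rfl
    rw [h3] at h2
    have hg1 := (hgpos (L l)).ne'
    have hg2 := (hgpos (μ (L l))).ne'
    field_simp at h2 ⊢
    rw [← h2]
  have := tendsto_nhds_unique hlim2 (hfd.tendsto.mono_left nhdsWithin_le_nhds)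
  rw [hL0] at this
  rw [← this]; ring

lemma kappa_exists
    (W : Set (ℝ × ℝ × ℝ)) (hW : IsOpen W) (hW0 : (0 : ℝ × ℝ × ℝ) ∈ W)
    (μ : ℝ × ℝ × ℝ → ℝ × ℝ × ℝ) (hμ : ContDiffOn ℝ (⊤ : ℕ∞) μ W)
    (hμlam : ∀ p ∈ W, (μ p).2.2 = p.2.2)
    (hμH : ∀ p ∈ W, Hpar (μ p) = Hpar p)
    (hμ0 : μ 0 = 0)
    (hd1 : (fderiv ℝ μ 0 (1, 0, 0)).1 = 1) :
    ∃ U ⊆ W, IsOpen U ∧ (0 : ℝ × ℝ × ℝ) ∈ U ∧ ∃ κ : ℝ × ℝ × ℝ → ℝ,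
      ContDiffOn ℝ (⊤ : ℕ∞) κ U ∧ ∀ p ∈ U,
        (μ p).1 - p.1 = κ p * (p.2.2 - (μ p).2.1 ^ 2 - (μ p).2.1 * p.2.1 - p.2.1 ^ 2) ∧
        (μ p).2.1 - p.2.1 = -(κ p * ((μ p).1 + p.1)) := by
  let θ : ℝ × ℝ × ℝ → ℝ × ℝ × ℝ := fun p => ((μ p).1 + p.1, p.2.1,
    p.2.2 - (μ p).2.1 ^ 2 - (μ p).2.1 * p.2.1 - p.2.1 ^ 2)
  have hθ : ContDiffOn ℝ (⊤ : ℕ∞) θ W := by unfold θ; fun_prop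
  have hθ0 : θ 0 = 0 := by simp [θ, hμ0]
  have hWn : W ∈ nhds (0 : ℝ × ℝ × ℝ) := hW.mem_nhds hW0
  have hμd : HasFDerivAt μ (fderiv ℝ μ 0) 0 :=
    ((hμ.differentiableOn (by simp)).differentiableAt hWn).hasFDerivAt
  have hθd : HasFDerivAt θ (fderiv ℝ θ 0) 0 :=
    ((hθ.differentiableOn (by simp)).differentiableAt hWn).hasFDerivAt
  have hval : ∀ v : ℝ × ℝ × ℝ, fderiv ℝ θ 0 v = ((fderiv ℝ μ 0 v).1 + v.1, v.2.1, v.2.2) := by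
    intro v
    have hid : HasFDerivAt (fun p : ℝ × ℝ × ℝ => p) (ContinuousLinearMap.id ℝ _) 0 := hasFDerivAt_id _
    have h := (hμd.fst.add hid.fst).prodMk (hid.snd.fst.prodMk
      (((hid.snd.snd.sub (hμd.snd.fst.pow 2)).sub (hμd.snd.fst.mul hid.snd.fst)).sub (hid.snd.fst.pow 2)))
    have h2 := hθd.unique h
    rw [h2]
    simp [hμ0]
  -- linear equivalence
  have hlin : ∀ v : ℝ × ℝ × ℝ, (fderiv ℝ μ 0 v).1 = v.1 + (fderiv ℝ μ 0 (0, v.2.1, v.2.2)).1 := by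
    intro v
    have e : v = v.1 • ((1, 0, 0) : ℝ × ℝ × ℝ) + (0, v.2.1, v.2.2) := by
      refine Prod.ext ?_ (Prod.ext ?_ ?_) <;> simp
    conv_lhs => rw [e, map_add, map_smul]
    simp [hd1]
  let ℓ : ℝ × ℝ →L[ℝ] ℝ := (ContinuousLinearMap.fst ℝ ℝ (ℝ × ℝ)).comp
    ((fderiv ℝ μ 0).comp (ContinuousLinearMap.inr ℝ ℝ (ℝ × ℝ)))
  have hℓ : ∀ w : ℝ × ℝ, ℓ w = (fderiv ℝ μ 0 (0, w.1, w.2)).1 := fun w => rfl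
  let inv : ℝ × ℝ × ℝ →L[ℝ] ℝ × ℝ × ℝ :=
    ((2:ℝ)⁻¹ • (ContinuousLinearMap.fst ℝ ℝ (ℝ × ℝ) - ℓ.comp (ContinuousLinearMap.snd ℝ ℝ (ℝ × ℝ)))).prod
      (ContinuousLinearMap.snd ℝ ℝ (ℝ × ℝ))
  have hinv : ∀ v, inv v = ((2:ℝ)⁻¹ * (v.1 - ℓ v.2), v.2.1, v.2.2) := fun v => rfl
  let θ' : (ℝ × ℝ × ℝ) ≃L[ℝ] (ℝ × ℝ × ℝ) := ContinuousLinearEquiv.equivOfInverse (fderiv ℝ θ 0) inv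
    (by intro v; rw [hval, hinv, hlin]; simp only [hℓ]; refine Prod.ext ?_ rfl; simp only; ring)
    (by intro v; rw [hval, hinv, hlin]; simp only [hℓ]; refine Prod.ext ?_ rfl; simp only; ring)
  have hθ'e : (θ' : (ℝ × ℝ × ℝ) →L[ℝ] (ℝ × ℝ × ℝ)) = fderiv ℝ θ 0 := by ext <;> rfl
  have hθd' : HasFDerivAt θ (θ' : (ℝ × ℝ × ℝ) →L[ℝ] (ℝ × ℝ × ℝ)) 0 := by rw [hθ'e]; exact hθd
  have hca : ContDiffAt ℝ (⊤ : ℕ∞) θ 0 := hθ.contDiffAt hWn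
  let e := hca.toOpenPartialHomeomorph θ hθd' (by simp)
  have hecoe : ∀ p, e p = θ p := fun p => rfl
  have he0 : (0 : ℝ × ℝ × ℝ) ∈ e.source := hca.mem_toOpenPartialHomeomorph_source hθd' (by simp)
  -- good set
  have hdc : ContinuousOn (fderiv ℝ θ) W := (hθ.continuousOn_fderiv_of_isOpen hW (by simp))
  let S : Set (ℝ × ℝ × ℝ) := e.source ∩ (W ∩ (fderiv ℝ θ) ⁻¹' range ((↑) : ((ℝ × ℝ × ℝ) ≃L[ℝ] (ℝ × ℝ × ℝ)) → _))
  have hS : IsOpen S := e.open_source.inter (hdc.isOpen_inter_preimage hW ContinuousLinearEquiv.isOpen)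
  have hS0 : (0 : ℝ × ℝ × ℝ) ∈ S := ⟨he0, hW0, θ', hθ'e⟩
  have hT : IsOpen (e.target ∩ e.symm ⁻¹' S) := e.symm.isOpen_inter_preimage hS
  have hs0 : e.symm 0 = 0 := by
    have := e.left_inv he0
    rw [hecoe, hθ0] at this
    exact this
  have hT0 : (0 : ℝ × ℝ × ℝ) ∈ e.target ∩ e.symm ⁻¹' S := by
    refine ⟨?_, ?_⟩
    · have := e.map_source he0
      rw [hecoe, hθ0] at this
      exact this
    · rw [mem_preimage, hs0]; exact hS0
  obtain ⟨r, hr, hrT⟩ := Metric.isOpen_iff.1 hT 0 hT0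
  have hψ : ContDiffOn ℝ (⊤ : ℕ∞) e.symm (Metric.ball 0 r) := by
    intro q hq
    obtain ⟨hq1, hq2⟩ := hrT hq
    obtain ⟨_, hqW, f, hf⟩ := hq2
    apply ContDiffAt.contDiffWithinAt
    refine e.contDiffAt_symm (f₀' := f) hq1 ?_ (hθ.contDiffAt (hW.mem_nhds hqW))
    rw [hf]
    exact ((hθ.differentiableOn (by simp)).differentiableAt (hW.mem_nhds hqW)).hasFDerivAt
  have hψW : MapsTo e.symm (Metric.ball 0 r) W := fun q hq => (hrT hq).2.2.1
  have hθψ : ∀ q ∈ Metric.ball (0 : ℝ × ℝ × ℝ) r, θ (e.symm q) = q := fun q hq => e.right_inv (hrT hq).1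
  have hμψ : ContDiffOn ℝ (⊤ : ℕ∞) (fun q => μ (e.symm q)) (Metric.ball 0 r) := hμ.comp hψ hψW
  let h : ℝ × ℝ × ℝ → ℝ := fun q => (μ (e.symm q)).2.1 - (e.symm q).2.1
  have hh : ContDiffOn ℝ (⊤ : ℕ∞) h (Metric.ball 0 r) := hμψ.snd.fst.sub hψ.snd.fst
  -- basic identity
  have hid : ∀ p ∈ W, ((μ p).1 - p.1) * (θ p).1 + ((μ p).2.1 - p.2.1) * (θ p).2.2 = 0 := by
    intro p hp
    have h1 := hμH p hp
    simp only [Hpar, hμlam p hp] at h1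
    simp only [θ]
    linear_combination h1
  have hidψ : ∀ q ∈ Metric.ball (0 : ℝ × ℝ × ℝ) r,
      ((μ (e.symm q)).1 - (e.symm q).1) * q.1 + h q * q.2.2 = 0 := by
    intro q hq
    have := hid _ (hψW hq)
    rw [hθψ q hq] at this
    exact this
  have h0 : ∀ q ∈ Metric.ball (0 : ℝ × ℝ × ℝ) r, q.1 = 0 → h q = 0 := by
    rintro ⟨x, y, l⟩ hq hx
    obtain rfl : x = 0 := hx
    have hc : Continuous (fun t : ℝ => ((0:ℝ), y, t)) := by fun_prop
    have hn : Metric.ball (0 : ℝ × ℝ × ℝ) r ∈ nhds ((0:ℝ), y, l) := Metric.isOpen_ball.mem_nhds hq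
    refine dens (φ := fun t => h (0, y, t)) (s := l) ?_ ?_
    · exact ContinuousAt.comp (g := h) (f := fun t : ℝ => ((0:ℝ), y, t))
        (hh.continuousOn.continuousAt hn) hc.continuousAt
    · filter_upwards [hc.continuousAt.preimage_mem_nhds hn] with t ht
      have := hidψ _ ht
      simp only at this
      linarith
  obtain ⟨k, hk, hkq⟩ := hadamard h r hh h0
  have hG : ∀ q ∈ Metric.ball (0 : ℝ × ℝ × ℝ) r,
      ((μ (e.symm q)).1 - (e.symm q).1) + k q * q.2.2 = 0 := by
    rintro ⟨x, y, l⟩ hq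
    have hc : Continuous (fun t : ℝ => (t, y, l)) := by fun_prop
    have hn : Metric.ball (0 : ℝ × ℝ × ℝ) r ∈ nhds (x, y, l) := Metric.isOpen_ball.mem_nhds hq
    let G : ℝ × ℝ × ℝ → ℝ := fun q => ((μ (e.symm q)).1 - (e.symm q).1) + k q * q.2.2
    have hGc : ContDiffOn ℝ (⊤ : ℕ∞) G (Metric.ball 0 r) := (hμψ.fst.sub hψ.fst).add (hk.mul (by fun_prop))
    refine dens (φ := fun t => G (t, y, l)) (s := x) ?_ ?_
    · exact ContinuousAt.comp (g := G) (f := fun t : ℝ => (t, y, l))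
        (hGc.continuousOn.continuousAt hn) hc.continuousAt
    · filter_upwards [hc.continuousAt.preimage_mem_nhds hn] with t ht
      have h1 := hidψ _ ht
      rw [hkq _ ht] at h1
      simp only [G] at h1 ⊢
      linear_combination h1
  refine ⟨(W ∩ e.source) ∩ θ ⁻¹' Metric.ball 0 r, fun p hp => hp.1.1, ?_, ?_, fun p => - k (θ p), ?_, ?_⟩
  · exact (hθ.continuousOn.mono inter_subset_left).isOpen_inter_preimage (hW.inter e.open_source) Metric.isOpen_ball
  · refine ⟨⟨hW0, he0⟩, ?_⟩
    rw [mem_preimage, hθ0]; exact Metric.mem_ball_self hr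
  · exact (hk.comp (hθ.mono fun p hp => hp.1.1) fun p hp => hp.2).neg
  · rintro p ⟨⟨hpW, hps⟩, hpb⟩
    have hpp : e.symm (θ p) = p := e.left_inv hps
    have h1 := hG _ hpb
    have h2 := hkq _ hpb
    simp only [h, hpp] at h1 h2
    have e1 : (θ p).1 = (μ p).1 + p.1 := rfl
    have e2 : (θ p).2.2 = p.2.2 - (μ p).2.1 ^ 2 - (μ p).2.1 * p.2.1 - p.2.1 ^ 2 := rfl
    rw [e2] at h1
    rw [h2, e1]
    constructor
    · linarith
    · ring

lemma ode_unique {X : ℝ × ℝ × ℝ → ℝ × ℝ × ℝ} (hX : ContDiff ℝ 1 X) {f h : ℝ → ℝ × ℝ × ℝ} {T : ℝ}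
    (hf : ∀ s ∈ uIcc 0 T, HasDerivAt f (X (f s)) s) (hh : ∀ s ∈ uIcc 0 T, HasDerivAt h (X (h s)) s)
    (h0 : f 0 = h 0) : f T = h T := by
  have hfc : ContinuousOn f (uIcc 0 T) := HasDerivAt.continuousOn hf
  have hhc : ContinuousOn h (uIcc 0 T) := HasDerivAt.continuousOn hh
  let S : Set (ℝ × ℝ × ℝ) := f '' uIcc 0 T ∪ h '' uIcc 0 T
  have hS : IsCompact S := (isCompact_uIcc.image_of_continuousOn hfc).union
    (isCompact_uIcc.image_of_continuousOn hhc)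
  obtain ⟨K, hK⟩ := (hX.locallyLipschitz.locallyLipschitzOn (s := S)).exists_lipschitzOnWith_of_compact hS
  have hfS : ∀ t ∈ uIcc 0 T, f t ∈ S := fun t ht => Or.inl (mem_image_of_mem f ht)
  have hhS : ∀ t ∈ uIcc 0 T, h t ∈ S := fun t ht => Or.inr (mem_image_of_mem h ht)
  rcases le_total 0 T with hT | hT
  · rw [uIcc_of_le hT] at *
    exact ODE_solution_unique_of_mem_Icc_right (v := fun _ => X) (s := fun _ => S) (K := K)
      (fun _ _ => hK) hfc (fun t ht => (hf t (Ico_subset_Icc_self ht)).hasDerivWithinAt)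
      (fun t ht => hfS t (Ico_subset_Icc_self ht))
      hhc (fun t ht => (hh t (Ico_subset_Icc_self ht)).hasDerivWithinAt)
      (fun t ht => hhS t (Ico_subset_Icc_self ht)) h0 (right_mem_Icc.2 hT)
  · rw [uIcc_of_ge hT] at *
    exact ODE_solution_unique_of_mem_Icc_left (v := fun _ => X) (s := fun _ => S) (K := K)
      (fun _ _ => hK) hfc (fun t ht => (hf t (Ioc_subset_Icc_self ht)).hasDerivWithinAt)
      (fun t ht => hfS t (Ioc_subset_Icc_self ht))
      hhc (fun t ht => (hh t (Ioc_subset_Icc_self ht)).hasDerivWithinAt)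
      (fun t ht => hhS t (Ioc_subset_Icc_self ht)) h0 (left_mem_Icc.2 hT)

def tau (g : ℝ × ℝ × ℝ → ℝ) (z : ℝ × ℝ × ℝ × ℝ) : ℝ := g (Psi z) / √(dd z)

lemma contDiffOn_tau {g : ℝ × ℝ × ℝ → ℝ} (hg : ContDiff ℝ (⊤ : ℕ∞) g) :
    ContDiffOn ℝ (⊤ : ℕ∞) (tau g) OO :=
  (hg.comp_contDiffOn contDiffOn_Psi).div contDiffOn_sqrt_dd
    fun _ hz => (Real.sqrt_pos.2 hz.1).ne'

lemma Psi_zero (p : ℝ × ℝ × ℝ) : Psi (0, p) = p :=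
  Psi_unique (x1 := p.1) (y1 := p.2.1) (by simp) (by simp) (by simp) (by simp)

lemma curve_exists {g : ℝ × ℝ × ℝ → ℝ} (hg : ContDiff ℝ (⊤ : ℕ∞) g) (hgpos : ∀ p, 0 < g p)
    {K : ℝ} {p : ℝ × ℝ × ℝ} (hp : ∀ t ∈ Icc (-K) K, (t, p) ∈ OO) {k : ℝ} (hk : |k| < K) :
    ∃ (γ : ℝ → ℝ × ℝ × ℝ) (a b : ℝ), 0 ∈ Ioo a b ∧ (∫ t in (0:ℝ)..k, tau g (t, p)) ∈ Ioo a b ∧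
      γ 0 = p ∧ γ (∫ t in (0:ℝ)..k, tau g (t, p)) = Psi (k, p) ∧
      ∀ s ∈ Ioo a b, HasDerivAt γ (Xpar g (γ s)) s := by
  have hK : 0 < K := (abs_nonneg k).trans_lt hk
  obtain ⟨hk1, hk2⟩ := abs_lt.1 hk
  have hcl : ∀ t, max (-K) (min K t) ∈ Icc (-K) K := fun t =>
    ⟨le_max_left _ _, max_le (by linarith) (min_le_left _ _)⟩
  have hcl' : ∀ t ∈ Icc (-K) K, max (-K) (min K t) = t := fun t ht => by
    rw [min_eq_right ht.2, max_eq_right ht.1]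
  let τ : ℝ → ℝ := fun t => tau g (max (-K) (min K t), p)
  have hτpos1 : ∀ t ∈ Icc (-K) K, 0 < tau g (t, p) := fun t ht =>
    div_pos (hgpos _) (Real.sqrt_pos.2 (hp t ht).1)
  have hτc1 : ContinuousOn (fun t => tau g (t, p)) (Icc (-K) K) :=
    (contDiffOn_tau hg).continuousOn.comp (by fun_prop) hp
  have hτc : Continuous τ := by
    have : Continuous (fun t : ℝ => max (-K) (min K t)) := by fun_prop
    exact hτc1.comp_continuous this hcl
  obtain ⟨t0, ht0, hmin⟩ := isCompact_Icc.exists_isMinOn (nonempty_Icc.2 (by linarith)) hτc1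
  set c := tau g (t0, p) with hc
  have hcpos : 0 < c := hτpos1 t0 ht0
  have hτge : ∀ t, c ≤ τ t := fun t => hmin (hcl t)
  let T : ℝ → ℝ := fun k => ∫ t in (0:ℝ)..k, τ t
  have hTd : ∀ t, HasDerivAt T (τ t) t := fun t => hτc.integral_hasStrictDerivAt 0 t |>.hasDerivAt
  have hT0 : T 0 = 0 := intervalIntegral.integral_same
  have hTc : Continuous T := continuous_iff_continuousAt.2 fun t => (hTd t).continuousAt
  have hTm : StrictMono T := strictMono_of_hasDerivAt_pos hTd fun t => hcpos.trans_le (hτge t)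
  have hTcm : Monotone (fun t => T t - c * t) := by
    have hd : ∀ t, HasDerivAt (fun t => T t - c * t) (τ t - c) t := fun t => by
      refine ((hTd t).sub ((hasDerivAt_id t).const_mul c)).congr_deriv ?_
      simp
    apply monotone_of_deriv_nonneg (fun t => (hd t).differentiableAt)
    intro t; rw [(hd t).deriv]; linarith [hτge t]
  have hsurj : Function.Surjective T := by
    apply hTc.surjective
    · refine Filter.tendsto_atTop_mono' _ ?_ (Filter.tendsto_id.const_mul_atTop hcpos)
      filter_upwards [Filter.eventually_ge_atTop 0] with t ht
      have := hTcm ht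
      simp only [hT0] at this
      simp only [id]; linarith
    · refine Filter.tendsto_atBot_mono' _ ?_ (Filter.tendsto_id.const_mul_atBot hcpos)
      filter_upwards [Filter.eventually_le_atBot 0] with t ht
      have := hTcm ht
      simp only [hT0] at this
      simp only [id]; linarith
  let e := hTm.orderIsoOfSurjective T hsurj
  have he : ∀ t, e t = T t := fun t => rfl
  have hTe : ∀ s, T (e.symm s) = s := fun s => e.apply_symm_apply s
  have heT : ∀ t, e.symm (T t) = t := fun t => e.symm_apply_apply t
  have hTk : T k = ∫ t in (0:ℝ)..k, tau g (t, p) := by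
    apply intervalIntegral.integral_congr
    intro t ht
    have : t ∈ Icc (-K) K := by
      rcases le_total 0 k with h | h
      · rw [uIcc_of_le h] at ht; exact ⟨by linarith [ht.1], by linarith [ht.2]⟩
      · rw [uIcc_of_ge h] at ht; exact ⟨by linarith [ht.1], by linarith [ht.2]⟩
    simp only [τ, hcl' t this]
  rw [← hTk]
  refine ⟨fun s => Psi (e.symm s, p), T (-K), T K, ?_, ⟨hTm hk1, hTm hk2⟩, ?_, ?_, ?_⟩
  · rw [← hT0]; exact ⟨hTm (by linarith), hTm hK⟩
  · have : e.symm 0 = 0 := by have := heT 0; rwa [hT0] at this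
    simp only [this, Psi_zero]
  · simp only [heT]
  · intro s hs
    have hes : e.symm s ∈ Icc (-K) K := by
      rw [← hTe s] at hs
      exact ⟨(hTm.lt_iff_lt.1 hs.1).le, (hTm.lt_iff_lt.1 hs.2).le⟩
    have hd : HasDerivAt (fun s => e.symm s) (τ (e.symm s))⁻¹ s :=
      HasDerivAt.of_local_left_inverse e.symm.continuous.continuousAt (hTd _)
        (hcpos.trans_le (hτge _)).ne' (Filter.Eventually.of_forall hTe)
    have h1 := hasDerivAt_Psi hgpos (hp _ hes)
    have h2 := h1.scomp s hd
    refine h2.congr_deriv ?_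
    have : τ (e.symm s) = tau g (e.symm s, p) := by simp only [τ, hcl' _ hes]
    rw [this, smul_smul]
    have h3 := (hτpos1 _ hes).ne'
    change ((tau g (e.symm s, p))⁻¹ * tau g (e.symm s, p)) • _ = _
    rw [inv_mul_cancel₀ h3, one_smul]

lemma level_local {g : ℝ × ℝ × ℝ → ℝ} (hgpos : ∀ p, 0 < g p)
    {V : Set (ℝ × ℝ × ℝ)} (hV : IsOpen V) {u : ℝ × ℝ × ℝ → ℝ} (hu : ContDiffOn ℝ (⊤ : ℕ∞) u V)
    (hdu : ∀ p ∈ V, p.1 ≠ 0 → fderiv ℝ u p (Xpar g p) = 0)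
    {r0 : ℝ × ℝ × ℝ} (h0 : r0 ∈ V) (hx0 : r0.1 ≠ 0) :
    ∀ᶠ r in nhds r0, Hpar r = Hpar r0 → r.2.2 = r0.2.2 → u r = u r0 := by
  obtain ⟨x0, y0, l⟩ := r0
  simp only at hx0
  let h : ℝ := Hpar (x0, y0, l)
  let D : ℝ → ℝ := fun y => (h + y ^ 3 - l * y) / x0 ^ 2
  let φ : ℝ → ℝ × ℝ × ℝ := fun y => (x0 * √(D y), y, l)
  have hD0 : D y0 = 1 := by
    simp only [D, h, Hpar]; field_simp; ring
  have hDc : Continuous D := by unfold D; fun_prop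
  have hφc : Continuous φ := by unfold φ; fun_prop
  have hφ0 : φ y0 = (x0, y0, l) := by simp [φ, hD0]
  have e1 : ∀ᶠ y in nhds y0, 0 < D y ∧ φ y ∈ V := by
    refine Filter.Eventually.and ?_ ?_
    · exact hDc.continuousAt.eventually (lt_mem_nhds (by rw [hD0]; norm_num))
    · exact hφc.continuousAt.eventually (hV.mem_nhds (by rw [hφ0]; exact h0))
  obtain ⟨ε, hε, hball⟩ := Metric.eventually_nhds_iff_ball.1 e1
  have hder : ∀ y ∈ Metric.ball y0 ε, HasDerivAt (fun y => u (φ y)) 0 y := by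
    intro y hy
    obtain ⟨hDy, hVy⟩ := hball y hy
    have hs := Real.sqrt_pos.2 hDy
    have hx : (φ y).1 ≠ 0 := mul_ne_zero hx0 hs.ne'
    have hDd : HasDerivAt D ((3 * y ^ 2 - l) / x0 ^ 2) y := by
      have := ((((hasDerivAt_id y).pow 3).const_add h).sub ((hasDerivAt_id y).const_mul l)).div_const (x0 ^ 2)
      refine this.congr_deriv ?_
      simp
    have h1 : HasDerivAt φ (x0 * ((3 * y ^ 2 - l) / x0 ^ 2 / (2 * √(D y))), 1, 0) y :=
      ((hDd.sqrt hDy.ne').const_mul x0).prodMk ((hasDerivAt_id y).prodMk (hasDerivAt_const y l))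
    have hg := (hgpos (φ y)).ne'
    have h2 : ((x0 * ((3 * y ^ 2 - l) / x0 ^ 2 / (2 * √(D y))), 1, 0) : ℝ × ℝ × ℝ)
        = (-(g (φ y)) / (2 * (φ y).1)) • Xpar g (φ y) := by
      simp only [Xpar, Prod.smul_mk, smul_eq_mul, Prod.mk.injEq, mul_zero, and_true]
      constructor
      · simp only [φ] at hg ⊢
        field_simp
        ring
      · field_simp
    have h3 := (((hu.contDiffAt (hV.mem_nhds hVy)).differentiableAt (by simp)).hasFDerivAt).comp_hasDerivAt y h1
    refine h3.congr_deriv ?_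
    rw [h2, map_smul, hdu _ hVy hx, smul_zero]
  have hconst : ∀ y ∈ Metric.ball y0 ε, u (φ y) = u (φ y0) := by
    intro y hy
    exact Metric.isOpen_ball.is_const_of_deriv_eq_zero (convex_ball y0 ε).isPreconnected
      (fun z hz => (hder z hz).differentiableAt.differentiableWithinAt)
      (fun z hz => (hder z hz).deriv) hy (Metric.mem_ball_self hε)
  have c1 : ∀ᶠ r : ℝ × ℝ × ℝ in nhds (x0, y0, l), 0 < r.1 / x0 :=
    (show Continuous fun r : ℝ × ℝ × ℝ => r.1 / x0 by fun_prop).continuousAt.eventually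
      (lt_mem_nhds (by simp [hx0]))
  have c2 : ∀ᶠ r : ℝ × ℝ × ℝ in nhds (x0, y0, l), r.2.1 ∈ Metric.ball y0 ε :=
    (show Continuous fun r : ℝ × ℝ × ℝ => r.2.1 by fun_prop).continuousAt.eventually
      (Metric.ball_mem_nhds _ hε)
  filter_upwards [c1, c2] with r hr1 hr2 hH hl
  have : r = φ r.2.1 := by
    obtain ⟨x, y, l'⟩ := r
    simp only at hr1 hl ⊢
    subst hl
    have : D y = (x / x0) ^ 2 := by
      simp only [D, h]; rw [← hH]; simp only [Hpar]; field_simp; ring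
    simp only [φ, this, Real.sqrt_sq hr1.le]
    congr 1
    field_simp
  rw [this, hconst _ hr2, hφ0]

lemma level_const {g : ℝ × ℝ × ℝ → ℝ} (hgpos : ∀ p, 0 < g p)
    {V : Set (ℝ × ℝ × ℝ)} (hV : IsOpen V) {u : ℝ × ℝ × ℝ → ℝ} (hu : ContDiffOn ℝ (⊤ : ℕ∞) u V)
    (hdu : ∀ p ∈ V, p.1 ≠ 0 → fderiv ℝ u p (Xpar g p) = 0) :
    ∀ p ∈ V, ∀ q ∈ connectedComponentIn
            {r ∈ V | Hpar r = Hpar p ∧ r.2.2 = p.2.2} p, u q = u p := by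
  intro p hp q hq
  set L := {r ∈ V | Hpar r = Hpar p ∧ r.2.2 = p.2.2} with hL
  have hpL : p ∈ L := ⟨hp, rfl, rfl⟩
  let L' := {r ∈ L | r.1 ≠ 0}
  let L0 := {r ∈ L | r.1 = 0}
  have hfin : L0.Finite := by
    let P : Polynomial ℝ := Polynomial.X ^ 3 - Polynomial.C p.2.2 * Polynomial.X + Polynomial.C (Hpar p)
    have hP : P ≠ 0 := by
      intro h
      have : P.coeff 3 = 0 := by rw [h]; simp
      simp [P, Polynomial.coeff_X] at this
    have := (Polynomial.finite_setOfPred_isRoot hP).image (fun y => ((0:ℝ), y, p.2.2))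
    refine this.subset ?_
    rintro ⟨x, y, l⟩ ⟨⟨-, h1, h2⟩, h3⟩
    simp only at h2 h3
    refine ⟨y, ?_, by simp [h2, h3]⟩
    simp only [mem_ofPred_eq, Polynomial.IsRoot, P]
    rw [← h1, ← h2, h3]
    simp [Hpar]
  have hcount' : (u '' L').Countable := by
    have hloc : ∀ r ∈ L', {s | Hpar s = Hpar r → s.2.2 = r.2.2 → u s = u r} ∈ nhdsWithin r L' :=
      fun r hr => mem_nhdsWithin_of_mem_nhds (level_local hgpos hV hu hdu hr.1.1 hr.2)
    obtain ⟨t, ht, htc, hcov⟩ := TopologicalSpace.countable_cover_nhdsWithin hloc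
    refine (htc.image u).mono ?_
    rintro _ ⟨s, hs, rfl⟩
    obtain ⟨r, hr, hsr⟩ := mem_iUnion₂.1 (hcov hs)
    have hrL := (ht hr).1
    refine ⟨r, hr, ?_⟩
    exact (hsr (hs.1.2.1.trans hrL.2.1.symm) (hs.1.2.2.trans hrL.2.2.symm)).symm
  have hcount : (u '' L).Countable := by
    refine (hcount'.union (hfin.countable.image u)).mono ?_
    rintro _ ⟨s, hs, rfl⟩
    by_cases h : s.1 = 0
    · exact Or.inr ⟨s, ⟨hs, h⟩, rfl⟩
    · exact Or.inl ⟨s, ⟨hs, h⟩, rfl⟩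
  have hsub := connectedComponentIn_subset L p
  have hpre := isPreconnected_connectedComponentIn (F := L) (x := p) |>.image u
    (hu.continuousOn.mono fun r hr => (hsub hr).1)
  exact hcount.isTotallyDisconnected _ (image_mono hsub) hpre
    (mem_image_of_mem u hq) (mem_image_of_mem u (mem_connectedComponentIn hpL))

lemma contDiff_Xpar {g : ℝ × ℝ × ℝ → ℝ} (hg : ContDiff ℝ (⊤ : ℕ∞) g) (hgpos : ∀ p, 0 < g p) :
    ContDiff ℝ 1 (Xpar g) := by
  have hg1 : ContDiff ℝ 1 g := hg.of_le (by exact_mod_cast le_top)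
  have hne : ∀ p, g p ≠ 0 := fun p => (hgpos p).ne'
  unfold Xpar
  refine ContDiff.prodMk ?_ (ContDiff.prodMk ?_ contDiff_const)
  · exact ContDiff.div (by fun_prop) hg1 hne
  · exact ContDiff.div (by fun_prop) hg1 hne

lemma du_zero {g : ℝ × ℝ × ℝ → ℝ} (hg : ContDiff ℝ (⊤ : ℕ∞) g) (hgpos : ∀ p, 0 < g p)
    {V : Set (ℝ × ℝ × ℝ)} (hV : IsOpen V) {u : ℝ × ℝ × ℝ → ℝ} (hu : ContDiffOn ℝ (⊤ : ℕ∞) u V)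
    {μ : ℝ × ℝ × ℝ → ℝ × ℝ × ℝ} (hμ : ContDiffOn ℝ (⊤ : ℕ∞) μ V)
    (hcomm : ∀ p ∈ V, fderiv ℝ μ p (Xpar g p) = Xpar g (μ p))
    (hcur : ∀ p ∈ V, ∃ (γ : ℝ → ℝ × ℝ × ℝ) (a b : ℝ), 0 ∈ Ioo a b ∧ u p ∈ Ioo a b ∧
      γ 0 = p ∧ γ (u p) = μ p ∧ ∀ s ∈ Ioo a b, HasDerivAt γ (Xpar g (γ s)) s)
    {p : ℝ × ℝ × ℝ} (hp : p ∈ V) (hX : Xpar g (μ p) ≠ 0) : fderiv ℝ u p (Xpar g p) = 0 := by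
  obtain ⟨γ, a, b, h0, hup, hγ0, hγu, hγ⟩ := hcur p hp
  have hu' := ((hu.contDiffAt (hV.mem_nhds hp)).differentiableAt (by simp)).hasFDerivAt
  have hμ' := ((hμ.contDiffAt (hV.mem_nhds hp)).differentiableAt (by simp)).hasFDerivAt
  have hγd : HasDerivAt γ (Xpar g p) 0 := by have := hγ 0 h0; rwa [hγ0] at this
  have hud : HasDerivAt (fun s => u (γ s)) (fderiv ℝ u p (Xpar g p)) 0 := by
    rw [← hγ0] at hu'
    have := hu'.comp_hasDerivAt 0 (hγ 0 h0)
    rwa [hγ0] at this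
  have hμd : HasDerivAt (fun s => μ (γ s)) (Xpar g (μ p)) 0 := by
    rw [← hγ0] at hμ'
    have := hμ'.comp_hasDerivAt 0 (hγ 0 h0)
    rwa [hγ0, hcomm p hp] at this
  have hsd : HasDerivAt (fun s => s + u (γ s)) (1 + fderiv ℝ u p (Xpar g p)) 0 :=
    (hasDerivAt_id (0:ℝ)).add hud
  have hγ2 : HasDerivAt (fun s => γ (s + u (γ s)))
      ((1 + fderiv ℝ u p (Xpar g p)) • Xpar g (μ p)) 0 := by
    have h1 : HasDerivAt γ (Xpar g (μ p)) (0 + u (γ 0)) := by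
      have := hγ _ hup; rw [hγu] at this; rwa [hγ0, zero_add]
    exact HasDerivAt.scomp (h := fun s => s + u (γ s)) (0:ℝ) h1 hsd
  have hev : (fun s => μ (γ s)) =ᶠ[nhds 0] fun s => γ (s + u (γ s)) := by
    have e1 : ∀ᶠ s in nhds (0:ℝ), s ∈ Ioo a b := Ioo_mem_nhds h0.1 h0.2
    have e2 : ∀ᶠ s in nhds (0:ℝ), γ s ∈ V :=
      hγd.continuousAt.eventually (hV.mem_nhds (by rwa [hγ0]))
    have e3 : ∀ᶠ s in nhds (0:ℝ), s + u (γ s) ∈ Ioo a b :=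
      hsd.continuousAt.eventually (isOpen_Ioo.mem_nhds (by simpa [hγ0] using hup))
    filter_upwards [e1, e2, e3] with s h1 h2 h3
    obtain ⟨δ, a', b', k0, kup, kδ0, kδu, kδ⟩ := hcur (γ s) h2
    rw [← kδu]
    refine ode_unique (f := δ) (h := fun r => γ (s + r)) (contDiff_Xpar hg hgpos) ?_ ?_ ?_
    · intro r hr
      exact kδ r (ordConnected_Ioo.uIcc_subset k0 kup hr)
    · intro r hr
      have : s + r ∈ Ioo a b := by
        refine ordConnected_Ioo.uIcc_subset h1 h3 ?_
        have : s + r ∈ (fun x => s + x) '' uIcc 0 (u (γ s)) := mem_image_of_mem _ hr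
        rw [image_const_add_uIcc, add_zero] at this
        exact this
      have h4 := (hγ _ this).scomp r ((hasDerivAt_id r).const_add s)
      rw [one_smul] at h4
      exact h4
    · simp [kδ0]
  have heq := (hγ2.congr_of_eventuallyEq hev).unique hμd
  rw [add_smul, one_smul, add_eq_left, smul_eq_zero] at heq
  exact heq.resolve_right hX

/-- Theorem 1 of the paper: the first return map `μ` near the parabolic point is the
time-1 map of a smooth Hamiltonian vector field `û·X`, where `û` is smooth and constant
on the connected components of the common level sets `{H = h, λ = const}`. -/
theorem first_return_map_is_hamiltonian
    (g : ℝ × ℝ × ℝ → ℝ) (hg : ContDiff ℝ (⊤ : ℕ∞) g) (hgpos : ∀ p, 0 < g p)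
    (W : Set (ℝ × ℝ × ℝ)) (hW : IsOpen W) (hW0 : (0 : ℝ × ℝ × ℝ) ∈ W)
    (μ : ℝ × ℝ × ℝ → ℝ × ℝ × ℝ) (hμ : ContDiffOn ℝ (⊤ : ℕ∞) μ W)
    (hμlam : ∀ p ∈ W, (μ p).2.2 = p.2.2)
    (hμH : ∀ p ∈ W, Hpar (μ p) = Hpar p)
    (hfix : ∀ p ∈ W, p.1 = 0 → p.2.2 = 3 * p.2.1 ^ 2 → μ p = p)
    (hcomm : ∀ p ∈ W, fderiv ℝ μ p (Xpar g p) = Xpar g (μ p))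
    (hmono : ∀ y lam : ℝ, ((0 : ℝ), y, lam) ∈ W →
      ((μ (0, y, lam)).2.1 - y) * (3 * y ^ 2 - lam) ≥ 0)
    (hxne : ∀ y lam : ℝ, ((0 : ℝ), y, lam) ∈ W → lam ≠ 3 * y ^ 2 →
      (μ (0, y, lam)).1 ≠ 0)
    (hbetween : ∀ y lam : ℝ, ((0 : ℝ), y, lam) ∈ W → lam ≠ 3 * y ^ 2 →
      ∀ t ∈ Set.Ioo (min y ((μ (0, y, lam)).2.1)) (max y ((μ (0, y, lam)).2.1)),
        t ^ 3 - lam * t - y ^ 3 + lam * y > 0) :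
    ∃ V ⊆ W, IsOpen V ∧ (0 : ℝ × ℝ × ℝ) ∈ V ∧
      ∃ u : ℝ × ℝ × ℝ → ℝ, ContDiffOn ℝ (⊤ : ℕ∞) u V ∧
        (∀ p ∈ V, ∀ q ∈ connectedComponentIn
            {r ∈ V | Hpar r = Hpar p ∧ r.2.2 = p.2.2} p, u q = u p) ∧
        (∀ p ∈ V, ∃ γ : ℝ → ℝ × ℝ × ℝ, γ 0 = p ∧
          (∀ s ∈ Set.uIcc (0 : ℝ) (u p), HasDerivAt γ (Xpar g (γ s)) s) ∧
          γ (u p) = μ p) := by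
  have hμ0 : μ 0 = 0 := hfix 0 hW0 rfl (by simp)
  obtain ⟨U, hUW, hU, hU0, κ, hκ, hκμ⟩ := kappa_exists W hW hW0 μ hμ hμlam hμH hμ0
    (dmu_one g hg hgpos W hW hW0 μ hμ hμlam hμ0 hcomm)
  let K : ℝ := |κ 0| + 1
  -- tube
  obtain ⟨A, B, hA, hB, hKA, h0B, hAB⟩ := generalized_tube_lemma (s := Icc (-K) K)
    (t := {(0 : ℝ × ℝ × ℝ)}) isCompact_Icc isCompact_singleton (n := OO) isOpen_OO (by
      rintro ⟨t, p⟩ ⟨-, hp⟩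
      simp only [mem_singleton_iff] at hp
      subst hp
      simp [OO, dd, cc])
  have hκc : ContinuousAt κ 0 := hκ.continuousOn.continuousAt (hU.mem_nhds hU0)
  have hμc : ContinuousAt μ 0 := hμ.continuousOn.continuousAt (hW.mem_nhds hW0)
  have e1 : ∀ᶠ p in nhds (0 : ℝ × ℝ × ℝ), |κ p| < K :=
    hκc.abs.eventually (gt_mem_nhds (by simp [K]))
  have e2 : ∀ᶠ p in nhds (0 : ℝ × ℝ × ℝ), 0 < 1 - κ p ^ 2 * (2 * (μ p).2.1 + p.2.1) := by
    have : ContinuousAt (fun p => 1 - κ p ^ 2 * (2 * (μ p).2.1 + p.2.1)) 0 := by fun_prop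
    exact this.eventually (lt_mem_nhds (by simp [hμ0]))
  have e3 : ∀ᶠ p in nhds (0 : ℝ × ℝ × ℝ), p ∈ U := hU.mem_nhds hU0
  have e4 : ∀ᶠ p in nhds (0 : ℝ × ℝ × ℝ), p ∈ B := hB.mem_nhds (h0B rfl)
  obtain ⟨V, hVs, hV, hV0⟩ := mem_nhds_iff.1
    ((e1.and e2).and (e3.and e4))
  have hVK : ∀ p ∈ V, |κ p| < K := fun p hp => (hVs hp).1.1
  have hVpos : ∀ p ∈ V, 0 < 1 - κ p ^ 2 * (2 * (μ p).2.1 + p.2.1) := fun p hp => (hVs hp).1.2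
  have hVU : V ⊆ U := fun p hp => (hVs hp).2.1
  have hVW := hVU.trans hUW
  have hVO : ∀ p ∈ V, ∀ t ∈ Icc (-K) K, (t, p) ∈ OO := fun p hp t ht =>
    hAB ⟨hKA ht, (hVs hp).2.2⟩
  have hPsi : ∀ p ∈ V, Psi (κ p, p) = μ p := by
    intro p hp
    obtain ⟨k1, k2⟩ := hκμ p (hVU hp)
    have := Psi_unique k1 k2 (hVpos p hp) (hVO p hp (κ p) ⟨(abs_lt.1 (hVK p hp)).1.le, (abs_lt.1 (hVK p hp)).2.le⟩).2
    have h2 : Psi (κ p, p) = ((μ p).1, (μ p).2.1, p.2.2) := this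
    rw [h2, ← hμlam p (hVW hp)]
  let u : ℝ × ℝ × ℝ → ℝ := fun p => κ p * ∫ t in (0:ℝ)..1, tau g (t * κ p, p)
  have hu_eq : ∀ p, u p = ∫ t in (0:ℝ)..κ p, tau g (t, p) := by
    intro p
    have := intervalIntegral.mul_integral_comp_mul_right (a := 0) (b := 1) (f := fun t => tau g (t, p)) (κ p)
    simpa [u] using this
  have hκV := hκ.mono hVU
  have hu : ContDiffOn ℝ (⊤ : ℕ∞) u V := by
    refine hκV.mul ?_
    have hm : ContDiffOn ℝ (⊤ : ℕ∞) (fun z : ℝ × ℝ × ℝ × ℝ => (z.1 * κ z.2, z.2)) (univ ×ˢ V) := by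
      have : ContDiffOn ℝ (⊤ : ℕ∞) (fun z : ℝ × ℝ × ℝ × ℝ => κ z.2) (univ ×ˢ V) :=
        hκV.comp contDiff_snd.contDiffOn (fun z hz => hz.2)
      exact (contDiff_fst.contDiffOn.mul this).prodMk contDiff_snd.contDiffOn
    refine param_integral ((univ ×ˢ V) ∩ (fun z : ℝ × ℝ × ℝ × ℝ => (z.1 * κ z.2, z.2)) ⁻¹' OO)
      (hm.continuousOn.isOpen_inter_preimage (isOpen_univ.prod hV) isOpen_OO) V hV ?_
      (fun z => tau g (z.1 * κ z.2, z.2)) ?_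
    · intro p hp t ht
      refine ⟨⟨trivial, hp⟩, hVO p hp _ ?_⟩
      change -K ≤ t * κ p ∧ t * κ p ≤ K
      rw [← abs_le, abs_mul, abs_of_nonneg ht.1]
      nlinarith [ht.1, ht.2, abs_nonneg (κ p), hVK p hp]
    · exact (contDiffOn_tau hg).comp (hm.mono inter_subset_left) fun z hz => hz.2
  have hcur : ∀ p ∈ V, ∃ (γ : ℝ → ℝ × ℝ × ℝ) (a b : ℝ), 0 ∈ Ioo a b ∧ u p ∈ Ioo a b ∧
      γ 0 = p ∧ γ (u p) = μ p ∧ ∀ s ∈ Ioo a b, HasDerivAt γ (Xpar g (γ s)) s := by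
    intro p hp
    have := curve_exists hg hgpos (hVO p hp) (hVK p hp)
    rwa [← hu_eq, hPsi p hp] at this
  refine ⟨V, hVW, hV, hV0, u, hu, ?_, ?_⟩
  · refine level_const hgpos hV hu ?_
    intro p hp hpx
    refine du_zero hg hgpos hV hu (hμ.mono hVW) (fun q hq => hcomm q (hVW hq)) hcur hp ?_
    intro hX
    apply hpx
    have hgn := (hgpos (μ p)).ne'
    simp only [Xpar, Prod.mk_eq_zero, div_eq_zero_iff, hgn, or_false, and_true] at hX
    obtain ⟨x1, x2⟩ := hX
    rw [hμlam p (hVW hp)] at x1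
    have hx1 : (μ p).1 = 0 := by linarith
    obtain ⟨k1, k2⟩ := hκμ p (hVU hp)
    have hpos := hVpos p hp
    rw [hx1] at k1 k2
    have hl : p.2.2 = 3 * (μ p).2.1 ^ 2 := by linarith
    rw [hl] at k1
    have : ((μ p).2.1 - p.2.1) * (1 - κ p ^ 2 * (2 * (μ p).2.1 + p.2.1)) = 0 := by
      linear_combination k2 + κ p * k1
    have hy := (mul_eq_zero.1 this).resolve_right hpos.ne'
    have hy' : p.2.1 = (μ p).2.1 := by linarith
    rw [hy'] at k1
    linear_combination -k1
  · intro p hp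
    obtain ⟨γ, a, b, h0, hup, hγ0, hγu, hγ⟩ := hcur p hp
    exact ⟨γ, hγ0, fun s hs => hγ s (ordConnected_Ioo.uIcc_subset h0 hup hs), hγu⟩
end
end

section
/- Let U ⊆ ℝ² be an open neighbourhood of (0,0), let g : ℝ³ → ℝ be C^∞, and let a, m : U → ℝ be C^∞ functions satisfying: (i) a(y,λ)² = m(y,λ)³ − λ·m(y,λ) − y³ + λy for all (y,λ) ∈ U; (ii) a(y,λ) = 0 if and only if λ = 3y², and m(y,λ) = y whenever λ = 3y²; (iii) (m(y,λ) − y)(3y² − λ) ≥ 0 on U; (iv) for every (y,λ) ∈ U with λ ≠ 3y² and every t strictly between y and m(y,λ), t³ − λt − y³ + λy > 0. For (y,λ) ∈ U with λ ≠ 3y² define u(y,λ) = η·∫_y^{m(y,λ)} g(η·√(t³ − λt − y³ + λy), t, λ) / (2·√(t³ − λt − y³ + λy)) dt, where η = sign(a(y,λ)). Then there exist an open neighbourhood V ⊆ U of (0,0) and a C^∞ function ũ : V → ℝ such that ũ(y,λ) = u(y,λ) for every (y,λ) ∈ V with λ ≠ 3y². -/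
open MeasureTheory Set

lemma aux_param {s : Set (ℝ × ℝ)} (hs : IsOpen s) (F : (ℝ × ℝ) × ℝ → ℝ)
    (hF : ContDiffOn ℝ (⊤ : ℕ∞) F (s ×ˢ univ)) :
    ContDiffOn ℝ (⊤ : ℕ∞) (fun p => ∫ t in (0:ℝ)..1, F (p, t)) s := by
  let χ : ContDiffBump (0:ℝ) := ⟨1, 2, one_pos, one_lt_two⟩
  have hχ : ContDiff ℝ (⊤ : ℕ∞) (χ : ℝ → ℝ) := χ.contDiff
  have key := contDiffOn_convolution_right_with_param (n := (⊤ : ℕ∞)) (μ := volume)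
    (f := (Icc (0:ℝ) 1).indicator (fun _ => (1:ℝ)))
    (g := fun (p : ℝ × ℝ) (x : ℝ) => F (p, -x) * χ x)
    (ContinuousLinearMap.lsmul ℝ ℝ : ℝ →L[ℝ] ℝ →L[ℝ] ℝ) hs (isCompact_closedBall (0:ℝ) 2)
    (by
      intro p x _ hx
      have : χ x = 0 := χ.zero_of_le_dist (by
        simp only [Metric.mem_closedBall, not_le] at hx
        exact hx.le)
      simp [this])
    (by
      apply Integrable.locallyIntegrable
      rw [integrable_indicator_iff measurableSet_Icc]
      exact continuousOn_const.integrableOn_compact isCompact_Icc)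
    (by
      have h1 : ContDiffOn ℝ (⊤ : ℕ∞) (fun q : (ℝ × ℝ) × ℝ => F (q.1, -q.2)) (s ×ˢ univ) := by
        apply hF.comp (by fun_prop : ContDiff ℝ (⊤ : ℕ∞) (fun q : (ℝ × ℝ) × ℝ => (q.1, -q.2))).contDiffOn
        intro q hq
        exact ⟨hq.1, trivial⟩
      exact h1.mul (hχ.comp contDiff_snd).contDiffOn)
  have k2 : ContDiffOn ℝ (⊤ : ℕ∞) (fun p : ℝ × ℝ => (p, (0:ℝ))) s :=
    (by fun_prop : ContDiff ℝ (⊤ : ℕ∞) (fun p : ℝ × ℝ => (p, (0:ℝ)))).contDiffOn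
  refine (key.comp k2 (fun p hp => ⟨hp, trivial⟩)).congr ?_
  intro p hp
  simp only [Function.comp, convolution]
  rw [intervalIntegral.integral_of_le zero_le_one, ← integral_Icc_eq_integral_Ioc,
    ← integral_indicator measurableSet_Icc]
  congr 1
  ext t
  by_cases ht : t ∈ Icc (0:ℝ) 1
  · have : χ (-t) = 1 := χ.one_of_mem_closedBall (by
      simp [χ, abs_le]; constructor <;> linarith [ht.1, ht.2])
    simp [ht, this]
  · simp [ht]

lemma aux_cut {U : Set (ℝ × ℝ)} (hU : IsOpen U) (hU0 : ((0 : ℝ), (0 : ℝ)) ∈ U)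
    (f : ℝ × ℝ → ℝ) (hf : ContDiffOn ℝ (⊤ : ℕ∞) f U) :
    ∃ F : ℝ × ℝ → ℝ, ContDiff ℝ (⊤ : ℕ∞) F ∧ (∀ᶠ p in nhds ((0:ℝ),(0:ℝ)), F p = f p) ∧
      (∀ p, p ∉ U → F p = 0) ∧ ∀ p, f p = 0 → F p = 0 := by
  obtain ⟨r, hr, hrU⟩ := Metric.nhds_basis_closedBall.mem_iff.1 (hU.mem_nhds hU0)
  let χ : ContDiffBump ((0:ℝ),(0:ℝ)) := ⟨r/2, r, by linarith, by linarith⟩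
  have hχ : ContDiff ℝ (⊤ : ℕ∞) (χ : ℝ × ℝ → ℝ) := χ.contDiff
  refine ⟨fun p => χ p * f p, ?_, ?_, ?_, ?_⟩
  · rw [contDiff_iff_contDiffAt]
    intro p
    by_cases hp : p ∈ U
    · exact hχ.contDiffAt.mul (hf.contDiffAt (hU.mem_nhds hp))
    · have h1 : p ∉ tsupport χ := by
        rw [χ.tsupport_eq]; exact fun h => hp (hrU h)
      have h2 := notMem_tsupport_iff_eventuallyEq.1 h1
      have : (fun p => χ p * f p) =ᶠ[nhds p] fun _ => 0 := by
        filter_upwards [h2] with q hq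
        simp [hq]
      exact contDiffAt_const.congr_of_eventuallyEq this
  · filter_upwards [χ.eventuallyEq_one] with p hp
    simp [hp]
  · intro p hp
    have : χ p = 0 := by
      by_contra h
      have h1 : p ∈ tsupport χ := subset_tsupport _ h
      rw [χ.tsupport_eq] at h1
      exact hp (hrU h1)
    simp [this]
  · intro p hp
    simp [hp]

lemma aux_had {U : Set (ℝ × ℝ)} (hU : IsOpen U) (hU0 : ((0 : ℝ), (0 : ℝ)) ∈ U)
    (f : ℝ × ℝ → ℝ) (hf : ContDiffOn ℝ (⊤ : ℕ∞) f U)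
    (h0 : ∀ p ∈ U, p.2 = 3 * p.1 ^ 2 → f p = 0) :
    ∃ B : ℝ × ℝ → ℝ, ContDiff ℝ (⊤ : ℕ∞) B ∧
      ∀ᶠ p in nhds ((0:ℝ),(0:ℝ)), f p = (3 * p.1 ^ 2 - p.2) * B p := by
  obtain ⟨F, hF, hFf, hFU, hF0⟩ := aux_cut hU hU0 f hf
  have hz : ∀ y : ℝ, F (y, 3 * y ^ 2) = 0 := by
    intro y
    by_cases h : (y, 3 * y ^ 2) ∈ U
    · exact hF0 _ (h0 _ h rfl)
    · exact hFU _ h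
  have hF' : ContDiff ℝ (⊤ : ℕ∞) (fun p => fderiv ℝ F p ((0:ℝ), (-1:ℝ))) :=
    (hF.fderiv_right (m := (⊤ : ℕ∞)) (by simp)).clm_apply contDiff_const
  refine ⟨fun p => ∫ t in (0:ℝ)..1,
    fderiv ℝ F (p.1, 3 * p.1 ^ 2 - t * (3 * p.1 ^ 2 - p.2)) ((0:ℝ), (-1:ℝ)), ?_, ?_⟩
  · rw [← contDiffOn_univ]
    apply aux_param isOpen_univ (fun q : (ℝ × ℝ) × ℝ =>
      fderiv ℝ F (q.1.1, 3 * q.1.1 ^ 2 - q.2 * (3 * q.1.1 ^ 2 - q.1.2)) ((0:ℝ), (-1:ℝ)))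
    apply ContDiff.contDiffOn
    exact hF'.comp (f := fun q : (ℝ × ℝ) × ℝ =>
      (q.1.1, 3 * q.1.1 ^ 2 - q.2 * (3 * q.1.1 ^ 2 - q.1.2))) (by fun_prop)
  · filter_upwards [hFf] with p hp
    rw [← hp, ← intervalIntegral.integral_const_mul]
    have hd : ∀ t : ℝ, HasDerivAt
        (fun t : ℝ => F (p.1, 3 * p.1 ^ 2 - t * (3 * p.1 ^ 2 - p.2)))
        ((3 * p.1 ^ 2 - p.2) *
          fderiv ℝ F (p.1, 3 * p.1 ^ 2 - t * (3 * p.1 ^ 2 - p.2)) ((0:ℝ), (-1:ℝ))) t := by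
      intro t
      have h1 : HasDerivAt (fun t : ℝ => (p.1, 3 * p.1 ^ 2 - t * (3 * p.1 ^ 2 - p.2)))
          ((0:ℝ), -(3 * p.1 ^ 2 - p.2)) t := by
        apply HasDerivAt.prodMk (hasDerivAt_const _ _)
        have h := ((hasDerivAt_id t).mul_const (3 * p.1 ^ 2 - p.2)).const_sub (3 * p.1 ^ 2)
        rw [one_mul] at h
        exact h
      have h2 := ((hF.differentiable (by simp)) 
        (p.1, 3 * p.1 ^ 2 - t * (3 * p.1 ^ 2 - p.2))).hasFDerivAt.comp_hasDerivAt t h1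
      have h3 : (3 * p.1 ^ 2 - p.2) *
          fderiv ℝ F (p.1, 3 * p.1 ^ 2 - t * (3 * p.1 ^ 2 - p.2)) ((0:ℝ), (-1:ℝ)) =
          fderiv ℝ F (p.1, 3 * p.1 ^ 2 - t * (3 * p.1 ^ 2 - p.2))
            ((0:ℝ), -(3 * p.1 ^ 2 - p.2)) := by
        rw [← smul_eq_mul, ← map_smul]
        congr 1
        simp
      rw [h3]
      exact h2
    rw [intervalIntegral.integral_eq_sub_of_hasDerivAt (fun t _ => hd t)]
    · simp [hz]
    · apply Continuous.intervalIntegrable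
      exact continuous_const.mul (hF'.continuous.comp (by fun_prop))

lemma aux_sq (H : ℝ → ℝ) : ∫ t in (0:ℝ)..1, H t = ∫ x in (0:ℝ)..1, 2 * x * H (x ^ 2) := by
  rw [intervalIntegral.integral_of_le zero_le_one, intervalIntegral.integral_of_le zero_le_one,
    integral_Ioc_eq_integral_Ioo, integral_Ioc_eq_integral_Ioo]
  have him : (fun x : ℝ => x ^ 2) '' Ioo 0 1 = Ioo 0 1 := by
    ext t
    constructor
    · rintro ⟨x, ⟨h1, h2⟩, rfl⟩
      exact ⟨by positivity, by simp only; nlinarith⟩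
    · rintro ⟨h1, h2⟩
      exact ⟨√t, ⟨Real.sqrt_pos.2 h1, by rw [Real.sqrt_lt' one_pos]; simpa using h2⟩,
        Real.sq_sqrt h1.le⟩
  have := integral_image_eq_integral_abs_deriv_smul (s := Ioo (0:ℝ) 1) (f := fun x => x ^ 2)
    (f' := fun x => 2 * x) measurableSet_Ioo
    (fun x _ => by simpa using (hasDerivAt_pow 2 x).hasDerivWithinAt)
    (by
      intro x hx y hy h
      exact (pow_left_inj₀ hx.1.le hy.1.le two_ne_zero).1 h) H
  rw [him] at this
  rw [this]
  apply setIntegral_congr_fun measurableSet_Ioo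
  intro x hx
  simp only [smul_eq_mul]
  rw [abs_of_pos (by linarith [hx.1])]

lemma aux_Q {x z σ : ℝ} (hx : |x| < 1/16) (hz : |z| < 1/64) (hσ : σ ^ 2 ≤ 4) :
    0 < 1 + x * σ ^ 2 + z * σ ^ 4 := by
  rw [abs_lt] at hx hz
  have h4 : σ ^ 4 ≤ 16 := by nlinarith [sq_nonneg σ]
  have h2 := sq_nonneg σ
  have h4' : 0 ≤ σ ^ 4 := by positivity
  nlinarith

lemma aux_value (G : ℝ → ℝ → ℝ) (y l A M b c : ℝ) (hl : l ≠ 3 * y ^ 2) (hA0 : A ≠ 0)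
    (hA : A = (3 * y ^ 2 - l) * b) (hM : M - y = (3 * y ^ 2 - l) * c)
    (hH : A ^ 2 = M ^ 3 - l * M - y ^ 3 + l * y)
    (hx : |3 * y * c| < 1/16) (hz : |(3 * y ^ 2 - l) * c ^ 2| < 1/64) (φ : ℝ → ℝ)
    (hφ : ∀ t ∈ Icc (0:ℝ) 1, φ t = t) :
    (∫ t in (0:ℝ)..1,
      G (A * φ t * √((1 + 3 * y * c * φ t ^ 2 + (3 * y ^ 2 - l) * c ^ 2 * φ t ^ 4) /
          (1 + 3 * y * c + (3 * y ^ 2 - l) * c ^ 2)))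
        (y + (3 * y ^ 2 - l) * c * φ t ^ 2) *
      (b / ((1 + 3 * y * c + (3 * y ^ 2 - l) * c ^ 2) *
        √((1 + 3 * y * c * φ t ^ 2 + (3 * y ^ 2 - l) * c ^ 2 * φ t ^ 4) /
          (1 + 3 * y * c + (3 * y ^ 2 - l) * c ^ 2))))) =
    Real.sign A * ∫ t in y..M,
      G (Real.sign A * √(t ^ 3 - l * t - y ^ 3 + l * y)) t /
        (2 * √(t ^ 3 - l * t - y ^ 3 + l * y)) := by
  obtain ⟨s, hs⟩ : ∃ s, s = 3 * y ^ 2 - l := ⟨_, rfl⟩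
  have hs0 : s ≠ 0 := by rw [hs]; intro h; apply hl; linarith
  obtain rfl : l = 3 * y ^ 2 - s := by linarith
  rw [sub_sub_cancel] at hA hz hM ⊢
  obtain rfl : M = y + s * c := by linarith
  have hQ1 : 0 < 1 + 3 * y * c + s * c ^ 2 := by
    simpa using aux_Q (σ := 1) hx hz (by norm_num)
  have hb : b ^ 2 = c * (1 + 3 * y * c + s * c ^ 2) := by
    have : s ^ 2 * b ^ 2 = s ^ 2 * (c * (1 + 3 * y * c + s * c ^ 2)) := by
      rw [hA] at hH
      linear_combination hH
    exact mul_left_cancel₀ (pow_ne_zero 2 hs0) this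
  have hb0 : b ≠ 0 := by rintro rfl; simp at hA; exact hA0 hA
  have hsub := intervalIntegral.mul_integral_comp_add_mul
    (f := fun t => G (Real.sign A * √(t ^ 3 - (3 * y ^ 2 - s) * t - y ^ 3 + (3 * y ^ 2 - s) * y)) t /
        (2 * √(t ^ 3 - (3 * y ^ 2 - s) * t - y ^ 3 + (3 * y ^ 2 - s) * y)))
      (a := 0) (b := 1) (s * c) y
  simp only [mul_zero, add_zero, mul_one] at hsub
  rw [← hsub, aux_sq (fun x => G (Real.sign A * √((y + s * c * x) ^ 3 - (3 * y ^ 2 - s) * (y + s * c * x) - y ^ 3 + (3 * y ^ 2 - s) * y))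
            (y + s * c * x) /
          (2 * √((y + s * c * x) ^ 3 - (3 * y ^ 2 - s) * (y + s * c * x) - y ^ 3 + (3 * y ^ 2 - s) * y))), ← intervalIntegral.integral_const_mul, ← intervalIntegral.integral_const_mul]
  rw [intervalIntegral.integral_of_le zero_le_one, intervalIntegral.integral_of_le zero_le_one,
    integral_Ioc_eq_integral_Ioo, integral_Ioc_eq_integral_Ioo]
  apply setIntegral_congr_fun measurableSet_Ioo
  intro t ht
  simp only
  rw [hφ t ⟨ht.1.le, ht.2.le⟩]
  have ht0 := ht.1
  have hQ : 0 < 1 + 3 * y * c * t ^ 2 + s * c ^ 2 * t ^ 4 :=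
    aux_Q hx hz (by nlinarith [ht.1, ht.2])
  obtain ⟨R, hR⟩ : ∃ R, R = √((1 + 3 * y * c * t ^ 2 + s * c ^ 2 * t ^ 4) /
          (1 + 3 * y * c + s * c ^ 2)) := ⟨_, rfl⟩
  have hRpos : 0 < R := by rw [hR]; exact Real.sqrt_pos.2 (div_pos hQ hQ1)
  have hR2 : R ^ 2 * (1 + 3 * y * c + s * c ^ 2) = 1 + 3 * y * c * t ^ 2 + s * c ^ 2 * t ^ 4 := by
    rw [hR, Real.sq_sqrt (div_pos hQ hQ1).le, div_mul_cancel₀ _ hQ1.ne']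
  rw [← hR]
  have hsq : √((y + s * c * t ^ 2) ^ 3 - (3 * y ^ 2 - s) * (y + s * c * t ^ 2) - y ^ 3 +
      (3 * y ^ 2 - s) * y) = |A| * t * R := by
    have : (|A| * t * R) ^ 2 = s ^ 2 * b ^ 2 * t ^ 2 * R ^ 2 := by
      rw [mul_pow, mul_pow, sq_abs, hA]; ring
    rw [← Real.sqrt_sq (by positivity : 0 ≤ |A| * t * R), this, hb]
    congr 1
    linear_combination (-(s ^ 2 * c * t ^ 2)) * hR2
  rw [hsq]
  have hsA : Real.sign A * |A| = A := by
    rcases lt_or_gt_of_ne hA0 with h | h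
    · rw [Real.sign_of_neg h, abs_of_neg h]; ring
    · rw [Real.sign_of_pos h, abs_of_pos h]; ring
  have hsA2 : Real.sign A = |A| / A := by
    rw [eq_div_iff hA0]
    rcases lt_or_gt_of_ne hA0 with h | h
    · rw [Real.sign_of_neg h, abs_of_neg h]; ring
    · rw [Real.sign_of_pos h, abs_of_pos h]; ring
  have e1 : Real.sign A * (|A| * t * R) = A * t * R := by
    rw [← mul_assoc, ← mul_assoc, hsA]
  rw [e1, hsA2]
  have hab : |A| ≠ 0 := abs_ne_zero.2 hA0
  have e2 : b / ((1 + 3 * y * c + s * c ^ 2) * R) = s * c / (A * R) := by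
    rw [hA, div_eq_div_iff (by positivity) (by positivity)]
    linear_combination s * R * hb
  rw [e2]
  field_simp

/-- The Lemma of the paper: the time function
`u(y,λ) = η ∫_y^{m(y,λ)} g(η√(t³−λt−y³+λy), t, λ) / (2√(t³−λt−y³+λy)) dt`,
`η = sign a(y,λ)`, defined off the parabola `λ = 3y²`, admits a smooth extension to a
neighbourhood of the origin. Here `a` and `m` are the components of the first return
map on the section `x = 0`. -/
theorem time_function_smooth_extension
    (U : Set (ℝ × ℝ)) (hU : IsOpen U) (hU0 : ((0 : ℝ), (0 : ℝ)) ∈ U)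
    (g : ℝ × ℝ × ℝ → ℝ) (hg : ContDiff ℝ (⊤ : ℕ∞) g)
    (a m : ℝ × ℝ → ℝ) (ha : ContDiffOn ℝ (⊤ : ℕ∞) a U) (hm : ContDiffOn ℝ (⊤ : ℕ∞) m U)
    (hH : ∀ p ∈ U, (a p) ^ 2 = (m p) ^ 3 - p.2 * m p - p.1 ^ 3 + p.2 * p.1)
    (hzero : ∀ p ∈ U, (a p = 0 ↔ p.2 = 3 * p.1 ^ 2))
    (hfix : ∀ p ∈ U, p.2 = 3 * p.1 ^ 2 → m p = p.1)
    (hmono : ∀ p ∈ U, (m p - p.1) * (3 * p.1 ^ 2 - p.2) ≥ 0)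
    (hbetween : ∀ p ∈ U, p.2 ≠ 3 * p.1 ^ 2 →
      ∀ t ∈ Set.Ioo (min p.1 (m p)) (max p.1 (m p)),
        t ^ 3 - p.2 * t - p.1 ^ 3 + p.2 * p.1 > 0) :
    ∃ V ⊆ U, IsOpen V ∧ ((0 : ℝ), (0 : ℝ)) ∈ V ∧
      ∃ u : ℝ × ℝ → ℝ, ContDiffOn ℝ (⊤ : ℕ∞) u V ∧
        ∀ p ∈ V, p.2 ≠ 3 * p.1 ^ 2 →
          u p = Real.sign (a p) *
            ∫ t in p.1..(m p),
              g (Real.sign (a p) * Real.sqrt (t ^ 3 - p.2 * t - p.1 ^ 3 + p.2 * p.1),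
                  t, p.2) /
                (2 * Real.sqrt (t ^ 3 - p.2 * t - p.1 ^ 3 + p.2 * p.1)) := by
  have hmy : ContDiffOn ℝ (⊤ : ℕ∞) (fun p : ℝ × ℝ => m p - p.1) U :=
    hm.sub contDiff_fst.contDiffOn
  obtain ⟨b, hb, hab⟩ := aux_had hU hU0 a ha (fun p hp h => (hzero p hp).2 h)
  obtain ⟨c, hc, hmc⟩ := aux_had hU hU0 _ hmy (fun p hp h => by simp [hfix p hp h])
  have hcc := hc.continuous
  have hx : ∀ᶠ p : ℝ × ℝ in nhds ((0:ℝ),(0:ℝ)), |3 * p.1 * c p| < 1/16 := by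
    have : Continuous (fun p : ℝ × ℝ => |3 * p.1 * c p|) := by fun_prop
    exact this.continuousAt.eventually_lt continuousAt_const (by norm_num)
  have hz : ∀ᶠ p : ℝ × ℝ in nhds ((0:ℝ),(0:ℝ)), |(3 * p.1 ^ 2 - p.2) * c p ^ 2| < 1/64 := by
    have : Continuous (fun p : ℝ × ℝ => |(3 * p.1 ^ 2 - p.2) * c p ^ 2|) := by fun_prop
    exact this.continuousAt.eventually_lt continuousAt_const (by norm_num)
  obtain ⟨V, hV, hVo, hV0⟩ := eventually_nhds_iff.1
    ((((hab.and hmc).and hx).and hz).and (hU.mem_nhds hU0))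
  have hVU : V ⊆ U := fun p hp => (hV p hp).2
  let χ : ContDiffBump (0:ℝ) := ⟨1, 2, one_pos, one_lt_two⟩
  have hχ : ContDiff ℝ (⊤ : ℕ∞) (χ : ℝ → ℝ) := χ.contDiff
  obtain ⟨φ, hφd⟩ : ∃ φ : ℝ → ℝ, φ = fun t => t * χ t := ⟨_, rfl⟩
  have hφs : ContDiff ℝ (⊤ : ℕ∞) φ := by rw [hφd]; exact contDiff_id.mul hχ
  have hφ1 : ∀ t ∈ Icc (0:ℝ) 1, φ t = t := by
    intro t ht
    have : χ t = 1 := χ.one_of_mem_closedBall (by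
      simp [χ, abs_le]; constructor <;> linarith [ht.1, ht.2])
    simp [hφd, this]
  have hφ2 : ∀ t, φ t ^ 2 ≤ 4 := by
    intro t
    simp only [hφd]
    by_cases h : 2 ≤ |t|
    · have : χ t = 0 := χ.zero_of_le_dist (by simpa [χ, Real.dist_eq] using h)
      simp [this]
    · have h1 := χ.nonneg' t
      have h2 : χ t ≤ 1 := χ.le_one
      have h3 : t ^ 2 ≤ 4 := by
        rw [← sq_abs]; nlinarith [abs_nonneg t]
      have h4 : χ t ^ 2 ≤ 1 := by nlinarith
      rw [mul_pow]
      nlinarith [sq_nonneg t, sq_nonneg (χ t)]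
  refine ⟨V, hVU, hVo, hV0, fun p => ∫ t in (0:ℝ)..1,
      g (a p * φ t * √((1 + 3 * p.1 * c p * φ t ^ 2 + (3 * p.1 ^ 2 - p.2) * c p ^ 2 * φ t ^ 4) /
          (1 + 3 * p.1 * c p + (3 * p.1 ^ 2 - p.2) * c p ^ 2)),
        p.1 + (3 * p.1 ^ 2 - p.2) * c p * φ t ^ 2, p.2) *
      (b p / ((1 + 3 * p.1 * c p + (3 * p.1 ^ 2 - p.2) * c p ^ 2) *
        √((1 + 3 * p.1 * c p * φ t ^ 2 + (3 * p.1 ^ 2 - p.2) * c p ^ 2 * φ t ^ 4) /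
          (1 + 3 * p.1 * c p + (3 * p.1 ^ 2 - p.2) * c p ^ 2)))), ?_, ?_⟩
  · apply aux_param hVo (fun q : (ℝ × ℝ) × ℝ => 
      g (a q.1 * φ q.2 * √((1 + 3 * q.1.1 * c q.1 * φ q.2 ^ 2 + (3 * q.1.1 ^ 2 - q.1.2) * c q.1 ^ 2 * φ q.2 ^ 4) /
          (1 + 3 * q.1.1 * c q.1 + (3 * q.1.1 ^ 2 - q.1.2) * c q.1 ^ 2)),
        q.1.1 + (3 * q.1.1 ^ 2 - q.1.2) * c q.1 * φ q.2 ^ 2, q.1.2) *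
      (b q.1 / ((1 + 3 * q.1.1 * c q.1 + (3 * q.1.1 ^ 2 - q.1.2) * c q.1 ^ 2) *
        √((1 + 3 * q.1.1 * c q.1 * φ q.2 ^ 2 + (3 * q.1.1 ^ 2 - q.1.2) * c q.1 ^ 2 * φ q.2 ^ 4) /
          (1 + 3 * q.1.1 * c q.1 + (3 * q.1.1 ^ 2 - q.1.2) * c q.1 ^ 2)))))
    intro q hq
    apply ContDiffAt.contDiffWithinAt
    obtain ⟨⟨⟨_, hx⟩, hz⟩, hqU⟩ := hV q.1 hq.1
    have hQ1 : 0 < 1 + 3 * q.1.1 * c q.1 + (3 * q.1.1 ^ 2 - q.1.2) * c q.1 ^ 2 := by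
      simpa using aux_Q (σ := 1) hx hz (by norm_num)
    have hQ := aux_Q hx hz (hφ2 q.2)
    have haq : ContDiffAt ℝ (⊤ : ℕ∞) (fun q : (ℝ × ℝ) × ℝ => a q.1) q :=
      (ha.contDiffAt (hU.mem_nhds hqU)).comp q contDiffAt_fst
    have hR : ContDiffAt ℝ (⊤ : ℕ∞) (fun q : (ℝ × ℝ) × ℝ =>
        √((1 + 3 * q.1.1 * c q.1 * φ q.2 ^ 2 + (3 * q.1.1 ^ 2 - q.1.2) * c q.1 ^ 2 * φ q.2 ^ 4) /
          (1 + 3 * q.1.1 * c q.1 + (3 * q.1.1 ^ 2 - q.1.2) * c q.1 ^ 2))) q := by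
      refine ContDiffAt.sqrt (f := fun q : (ℝ × ℝ) × ℝ => 
        ((1 + 3 * q.1.1 * c q.1 * φ q.2 ^ 2 + (3 * q.1.1 ^ 2 - q.1.2) * c q.1 ^ 2 * φ q.2 ^ 4) /
          (1 + 3 * q.1.1 * c q.1 + (3 * q.1.1 ^ 2 - q.1.2) * c q.1 ^ 2))) ?_ (div_pos hQ hQ1).ne'
      exact ContDiffAt.div (by fun_prop) (by fun_prop) hQ1.ne'
    apply ContDiffAt.mul
    · apply hg.contDiffAt.comp q (f := fun q : (ℝ × ℝ) × ℝ =>  (_, _, _))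
      apply ContDiffAt.prodMk
      · exact (haq.mul (by fun_prop)).mul hR
      · fun_prop
    · apply ContDiffAt.div (by fun_prop)
      · exact ContDiffAt.mul (by fun_prop) hR
      · exact (mul_pos hQ1 (Real.sqrt_pos.2 (div_pos hQ hQ1))).ne'
  · intro p hp hne
    obtain ⟨⟨⟨⟨h1, h2⟩, hx⟩, hz⟩, hpU⟩ := hV p hp
    exact aux_value (fun x t => g (x, t, p.2)) p.1 p.2 (a p) (m p) (b p) (c p) hne
      (fun h => hne ((hzero p hpU).1 h)) h1 h2 (hH p hpU) hx hz φ hφ1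
end

section
/- Let y, λ ∈ ℝ with 3y² − λ > 0, let ν > 0, set m = y + ν, and suppose t³ − λt − y³ + λy > 0 for all t ∈ (y, m]. Let g : ℝ² → ℝ be continuous. Then ∫_y^m g(√(t³ − λt − y³ + λy), t) / (2·√(t³ − λt − y³ + λy)) dt = ν·∫_0^1 g(z·√(z⁴ν³ + 3z²ν²y + 3νy² − λν), y + z²ν) / √(z⁴ν³ + 3z²ν²y + 3νy² − λν) dz, both integrals being well defined (the integrands are integrable on the respective intervals). -/
open MeasureTheory

/-- The substitution `t = y + z²ν` in the integral defining the time function: both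
integrands are integrable and the two integrals agree (up to the factor `ν`). -/
theorem substitution_t_eq_y_add_zsq_nu (y lam ν m : ℝ)
    (hconv : 3 * y ^ 2 - lam > 0) (hν : 0 < ν) (hm : m = y + ν)
    (hpos : ∀ t ∈ Set.Ioc y m, t ^ 3 - lam * t - y ^ 3 + lam * y > 0)
    (g : ℝ × ℝ → ℝ) (hg : Continuous g) :
    IntervalIntegrable
      (fun t : ℝ =>
        g (Real.sqrt (t ^ 3 - lam * t - y ^ 3 + lam * y), t) /
          (2 * Real.sqrt (t ^ 3 - lam * t - y ^ 3 + lam * y)))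
      MeasureTheory.volume y m ∧
    IntervalIntegrable
      (fun z : ℝ =>
        g (z * Real.sqrt (z ^ 4 * ν ^ 3 + 3 * z ^ 2 * ν ^ 2 * y + 3 * ν * y ^ 2 - lam * ν),
            y + z ^ 2 * ν) /
          Real.sqrt (z ^ 4 * ν ^ 3 + 3 * z ^ 2 * ν ^ 2 * y + 3 * ν * y ^ 2 - lam * ν))
      MeasureTheory.volume 0 1 ∧
    (∫ t in y..m,
        g (Real.sqrt (t ^ 3 - lam * t - y ^ 3 + lam * y), t) /
          (2 * Real.sqrt (t ^ 3 - lam * t - y ^ 3 + lam * y))) =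
      ν * ∫ z in (0 : ℝ)..1,
        g (z * Real.sqrt (z ^ 4 * ν ^ 3 + 3 * z ^ 2 * ν ^ 2 * y + 3 * ν * y ^ 2 - lam * ν),
            y + z ^ 2 * ν) /
          Real.sqrt (z ^ 4 * ν ^ 3 + 3 * z ^ 2 * ν ^ 2 * y + 3 * ν * y ^ 2 - lam * ν) := by
  set P : ℝ → ℝ := fun z =>
    z ^ 4 * ν ^ 3 + 3 * z ^ 2 * ν ^ 2 * y + 3 * ν * y ^ 2 - lam * ν with hP
  set R : ℝ → ℝ := fun t => t ^ 3 - lam * t - y ^ 3 + lam * y with hR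
  set G : ℝ → ℝ := fun t => g (Real.sqrt (R t), t) / (2 * Real.sqrt (R t)) with hG
  set H : ℝ → ℝ := fun z => g (z * Real.sqrt (P z), y + z ^ 2 * ν) / Real.sqrt (P z) with hH
  change IntervalIntegrable G volume y m ∧ IntervalIntegrable H volume 0 1 ∧
    (∫ t in y..m, G t) = ν * ∫ z in (0 : ℝ)..1, H z
  have hRP : ∀ z, R (y + z ^ 2 * ν) = z ^ 2 * P z := by
    intro z; simp only [hR, hP]; ring
  have hPpos : ∀ z ∈ Set.Icc (0 : ℝ) 1, 0 < P z := by
    intro z hz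
    rcases hz.1.eq_or_lt with h0 | h0
    · subst h0
      have := mul_pos hν hconv
      simp only [hP]; nlinarith
    · have hz2 : 0 < z ^ 2 := by positivity
      have hz1 : z ^ 2 ≤ 1 := by nlinarith [hz.2]
      have h := hpos (y + z ^ 2 * ν) ⟨by nlinarith [mul_pos hz2 hν], by rw [hm]; nlinarith⟩
      have h' : 0 < z ^ 2 * P z := by rw [← hRP]; exact h
      exact (mul_pos_iff_of_pos_left hz2).1 h'
  have hPc : Continuous P := by simp only [hP]; fun_prop
  have hHc : ContinuousOn H (Set.uIcc 0 1) := by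
    rw [Set.uIcc_of_le zero_le_one]
    apply ContinuousOn.div
    · exact (hg.comp (by fun_prop : Continuous fun z : ℝ =>
        (z * Real.sqrt (P z), y + z ^ 2 * ν))).continuousOn
    · exact (Real.continuous_sqrt.comp hPc).continuousOn
    · intro z hz
      exact (Real.sqrt_pos.2 (hPpos z hz)).ne'
  have hHi : IntervalIntegrable H volume 0 1 := hHc.intervalIntegrable
  let f : ℝ → ℝ := fun z => y + z ^ 2 * ν
  let f' : ℝ → ℝ := fun z => 2 * z * ν
  have hf : ContinuousOn f (Set.uIcc 0 1) := by
    apply Continuous.continuousOn; simp only [f]; fun_prop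
  have hff' : ∀ x ∈ Set.Ioo (min (0:ℝ) 1) (max 0 1), HasDerivAt f (f' x) x := by
    intro x _
    have := ((hasDerivAt_pow 2 x).mul_const ν).const_add y
    simpa [f, f'] using this
  have hf'0 : ∀ x ∈ Set.Ioo (min (0:ℝ) 1) (max 0 1), 0 ≤ f' x := by
    intro x hx
    have : 0 < x := by simpa using hx.1
    simp only [f']; positivity
  have key : ∀ z ∈ Set.uIoc (0:ℝ) 1, ν * H z = (G ∘ f) z * f' z := by
    intro z hz
    rw [Set.uIoc_of_le zero_le_one] at hz
    have hs := Real.sqrt_pos.2 (hPpos z ⟨hz.1.le, hz.2⟩)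
    have hz0 := hz.1
    have : Real.sqrt (R (y + z ^ 2 * ν)) = z * Real.sqrt (P z) := by
      rw [hRP, Real.sqrt_mul (sq_nonneg z), Real.sqrt_sq hz0.le]
    simp only [Function.comp, f, f', hG, hH, this]
    field_simp
  have h0 : f 0 = y := by simp [f]
  have h1 : f 1 = m := by simp [f, hm]
  have hint := intervalIntegral.integral_comp_mul_deriv_of_deriv_nonneg (g := G) hf hff' hf'0
  have hiff := intervalIntegral.integrable_comp_mul_deriv_iff_of_deriv_nonneg (g := G) hf hff' hf'0
  rw [h0, h1] at hint hiff
  refine ⟨hiff.1 ((hHi.const_mul ν).congr key), hHi, ?_⟩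
  rw [← hint, ← intervalIntegral.integral_const_mul]
  exact (intervalIntegral.integral_congr_ae (Filter.Eventually.of_forall key)).symm
end

section
/- Let λ > 0 and h ∈ ℝ satisfy 27h² < 4λ³, and let C = {(x,y) ∈ ℝ² : x² − y³ + λy = h}. Then there exist nonempty disjoint sets K, B ⊆ ℝ² with C = K ∪ B such that K and B are each connected, each is open (and closed) in C, K is compact, and B is unbounded. In particular, C has exactly two connected components, exactly one of which is compact. -/
open Set

theorem aux_branch (g : ℝ → ℝ) (hg : Continuous g) (S : Set ℝ) (hS : IsPreconnected S)
    (a : ℝ) (ha : a ∈ S) (ga : g a = 0) (hpos : ∀ y ∈ S, 0 ≤ g y) :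
    IsConnected {p : ℝ × ℝ | p.1 ^ 2 = g p.2 ∧ p.2 ∈ S} ∧
    (IsCompact S → IsCompact {p : ℝ × ℝ | p.1 ^ 2 = g p.2 ∧ p.2 ∈ S}) := by
  have e : {p : ℝ × ℝ | p.1 ^ 2 = g p.2 ∧ p.2 ∈ S} =
      (fun y => (√(g y), y)) '' S ∪ (fun y => (-√(g y), y)) '' S := by
    ext ⟨x, y⟩
    simp only [mem_setOf_eq, mem_union, mem_image, Prod.mk.injEq]
    constructor
    · rintro ⟨h1, h2⟩
      rcases le_total 0 x with hx | hx
      · left; exact ⟨y, h2, by rw [← h1, Real.sqrt_sq hx], rfl⟩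
      · right
        refine ⟨y, h2, ?_, rfl⟩
        rw [← h1, Real.sqrt_sq_eq_abs, abs_of_nonpos hx, neg_neg]
    · rintro (⟨z, hz, rfl, rfl⟩ | ⟨z, hz, rfl, rfl⟩)
      · exact ⟨Real.sq_sqrt (hpos _ hz), hz⟩
      · exact ⟨by rw [neg_sq, Real.sq_sqrt (hpos _ hz)], hz⟩
  have c1 : Continuous (fun y => (√(g y), y)) := by fun_prop
  have c2 : Continuous (fun y => (-√(g y), y)) := by fun_prop
  rw [e]
  refine ⟨⟨⟨_, Or.inl ⟨a, ha, rfl⟩⟩, ?_⟩, fun hc => (hc.image c1).union (hc.image c2)⟩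
  refine IsPreconnected.union (0, a) ⟨a, ha, ?_⟩ ⟨a, ha, ?_⟩ (hS.image _ c1.continuousOn)
    (hS.image _ c2.continuousOn)
  · simp [ga]
  · simp [ga]

/-- For `λ > 0` and `27h² < 4λ³`, the level curve `C = {x² − y³ + λy = h}` splits into
exactly two connected components: a compact oval `K` and an unbounded branch `B`,
each clopen in `C`. -/
theorem level_curve_swallowtail_two_components (lam h : ℝ) (hlam : 0 < lam)
    (hh : 27 * h ^ 2 < 4 * lam ^ 3) (C : Set (ℝ × ℝ))
    (hC : C = {p : ℝ × ℝ | p.1 ^ 2 - p.2 ^ 3 + lam * p.2 = h}) :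
    ∃ K B : Set (ℝ × ℝ),
      K.Nonempty ∧ B.Nonempty ∧ Disjoint K B ∧ C = K ∪ B ∧
      IsConnected K ∧ IsConnected B ∧
      IsClopen {q : C | (q : ℝ × ℝ) ∈ K} ∧ IsClopen {q : C | (q : ℝ × ℝ) ∈ B} ∧
      IsCompact K ∧ ¬ Bornology.IsBounded B ∧
      (∀ p ∈ C, connectedComponentIn C p = K ∨ connectedComponentIn C p = B) := by
  obtain ⟨s, hs, rfl⟩ : ∃ s : ℝ, 0 < s ∧ lam = 3 * s ^ 2 :=
    ⟨√(lam / 3), by positivity, by rw [Real.sq_sqrt (by positivity)]; ring⟩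
  have hs3 : 0 < s ^ 3 := by positivity
  have hab : |h| < 2 * s ^ 3 := by
    apply abs_lt_of_sq_lt_sq _ (by positivity)
    nlinarith
  obtain ⟨h1, h2⟩ := abs_lt.1 hab
  let g : ℝ → ℝ := fun y => y ^ 3 - 3 * s ^ 2 * y + h
  have hg : Continuous g := by fun_prop
  have gdef : ∀ y, g y = y ^ 3 - 3 * s ^ 2 * y + h := fun _ => rfl
  obtain ⟨a, ⟨a1, a2⟩, ga⟩ := intermediate_value_Ioo (show -(2*s) ≤ -s by linarith)
    hg.continuousOn (show (0:ℝ) ∈ Ioo _ _ by constructor <;> rw [gdef] <;> nlinarith)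
  obtain ⟨b, ⟨b1, b2⟩, gb⟩ := intermediate_value_Ioo' (show -s ≤ s by linarith)
    hg.continuousOn (show (0:ℝ) ∈ Ioo _ _ by constructor <;> rw [gdef] <;> nlinarith)
  obtain ⟨c, ⟨c1, c2⟩, gc⟩ := intermediate_value_Ioo (show s ≤ 2*s by linarith)
    hg.continuousOn (show (0:ℝ) ∈ Ioo _ _ by constructor <;> rw [gdef] <;> nlinarith)
  rw [gdef] at ga gb gc
  have e1 : b^2+a*b+a^2 = 3*s^2 := by
    apply mul_left_cancel₀ (show b - a ≠ 0 by linarith)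
    linarith
  have e2 : c^2+a*c+a^2 = 3*s^2 := by
    apply mul_left_cancel₀ (show c - a ≠ 0 by linarith)
    linarith
  have e3 : a + b + c = 0 := by
    apply mul_left_cancel₀ (show c - b ≠ 0 by linarith)
    linarith
  have fac : ∀ y, g y = (y - a) * (y - b) * (y - c) := by
    intro y
    have ec : c = -a-b := by linarith
    have eh : h = 3*s^2*a - a^3 := by linarith
    rw [gdef, eh, ← e1, ec]; ring
  have hKe : {p : ℝ × ℝ | p ∈ C ∧ p.2 < s} = {p | p.1 ^ 2 = g p.2 ∧ p.2 ∈ Icc a b} := by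
    ext ⟨x, y⟩
    simp only [hC, mem_setOf_eq, mem_Icc]
    constructor
    · rintro ⟨q1, q2⟩
      have q : x ^ 2 = g y := by rw [gdef]; linarith
      refine ⟨q, ?_⟩
      have q3 : 0 ≤ (y - a) * (y - b) * (y - c) := by rw [← fac, ← q]; positivity
      have q4 : (y - a) * (y - b) ≤ 0 := by
        by_contra! hn
        nlinarith [mul_pos hn (show 0 < c - y by linarith)]
      constructor <;> by_contra! hn <;> nlinarith
    · rintro ⟨q, q1, q2⟩
      rw [gdef] at q
      exact ⟨by linarith, by linarith⟩
  have hBe : {p : ℝ × ℝ | p ∈ C ∧ s < p.2} = {p | p.1 ^ 2 = g p.2 ∧ p.2 ∈ Ici c} := by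
    ext ⟨x, y⟩
    simp only [hC, mem_setOf_eq, mem_Ici]
    constructor
    · rintro ⟨q1, q2⟩
      have q : x ^ 2 = g y := by rw [gdef]; linarith
      refine ⟨q, ?_⟩
      have q3 : 0 ≤ (y - a) * (y - b) * (y - c) := by rw [← fac, ← q]; positivity
      have q4 : 0 < (y - a) * (y - b) := mul_pos (by linarith) (by linarith)
      by_contra! hn
      nlinarith
    · rintro ⟨q, q1⟩
      rw [gdef] at q
      exact ⟨by linarith, by linarith⟩
  have hne : ∀ p ∈ C, p.2 ≠ s := by
    rintro ⟨x, y⟩ hp (rfl : y = s)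
    simp only [hC, mem_setOf_eq] at hp
    nlinarith [sq_nonneg x]
  obtain ⟨Kc, Kk⟩ := aux_branch g hg (Icc a b) isPreconnected_Icc a ⟨le_rfl, by linarith⟩ ga (by
    rintro y ⟨y1, y2⟩
    rw [fac]
    exact mul_nonneg_of_nonpos_of_nonpos
      (mul_nonpos_of_nonneg_of_nonpos (by linarith) (by linarith)) (by linarith))
  have Bpos : ∀ y ∈ Ici c, 0 ≤ g y := by
    intro y (hy : c ≤ y)
    rw [fac]
    exact mul_nonneg (mul_nonneg (by linarith) (by linarith)) (by linarith)
  obtain ⟨Bc, -⟩ := aux_branch g hg (Ici c) isPreconnected_Ici c self_mem_Ici gc Bpos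
  have Bu : ¬ Bornology.IsBounded {p : ℝ × ℝ | p.1 ^ 2 = g p.2 ∧ p.2 ∈ Ici c} := by
    intro hb
    obtain ⟨R, hR⟩ := hb.exists_norm_le
    have hm : c ≤ max c (R + 1) := le_max_left _ _
    have := hR (√(g (max c (R+1))), max c (R+1)) ⟨Real.sq_sqrt (Bpos _ hm), hm⟩
    have h3 := (norm_snd_le _).trans this
    have h4 := (le_abs_self _).trans h3
    have : R + 1 ≤ max c (R + 1) := le_max_right _ _
    simp only at h4
    linarith
  rw [← hKe] at Kc Kk
  rw [← hBe] at Bc Bu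
  have oU : IsOpen {p : ℝ × ℝ | p.2 < s} := isOpen_lt continuous_snd continuous_const
  have oV : IsOpen {p : ℝ × ℝ | s < p.2} := isOpen_lt continuous_const continuous_snd
  have dUV : Disjoint {p : ℝ × ℝ | p.2 < s} {p : ℝ × ℝ | s < p.2} := by
    rw [Set.disjoint_left]; intro p (hp : p.2 < s) (hq : s < p.2); linarith
  have cov : ∀ p ∈ C, p.2 < s ∨ s < p.2 := fun p hp => lt_or_gt_of_ne (hne p hp)
  have o1 : IsOpen {q : C | (q : ℝ × ℝ) ∈ {p : ℝ × ℝ | p ∈ C ∧ p.2 < s}} := by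
    convert oU.preimage (continuous_subtype_val (p := (· ∈ C))) using 1
    ext q; simp
  have o2 : IsOpen {q : C | (q : ℝ × ℝ) ∈ {p : ℝ × ℝ | p ∈ C ∧ s < p.2}} := by
    convert oV.preimage (continuous_subtype_val (p := (· ∈ C))) using 1
    ext q; simp
  have ec : {q : C | (q : ℝ × ℝ) ∈ {p : ℝ × ℝ | p ∈ C ∧ s < p.2}} =
      {q : C | (q : ℝ × ℝ) ∈ {p : ℝ × ℝ | p ∈ C ∧ p.2 < s}}ᶜ := by
    ext ⟨q, hq⟩
    have := hne q hq
    simp only [mem_setOf_eq, mem_compl_iff, hq, true_and, not_lt]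
    exact ⟨le_of_lt, fun h => lt_of_le_of_ne h this.symm⟩
  have cl1 : IsClopen {q : C | (q : ℝ × ℝ) ∈ {p : ℝ × ℝ | p ∈ C ∧ p.2 < s}} :=
    ⟨⟨ec ▸ o2⟩, o1⟩
  refine ⟨{p | p ∈ C ∧ p.2 < s}, {p | p ∈ C ∧ s < p.2}, Kc.nonempty, Bc.nonempty,
    dUV.mono (fun p hp => hp.2) (fun p hp => hp.2), ?_, Kc, Bc, cl1, ec ▸ cl1.compl,
    Kk isCompact_Icc, Bu, ?_⟩
  · ext p
    have := cov p
    simp only [mem_union, mem_setOf_eq]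
    tauto
  · intro p hp
    have hsub := connectedComponentIn_subset C p
    have hpre : IsPreconnected (connectedComponentIn C p) := isPreconnected_connectedComponentIn
    have hmem := mem_connectedComponentIn hp
    rcases cov p hp with hlt | hlt
    · left
      apply Subset.antisymm
      · have := hpre.subset_left_of_subset_union oU oV dUV (fun q hq => cov q (hsub hq))
          ⟨p, hmem, hlt⟩
        exact fun q hq => ⟨hsub hq, this hq⟩
      · exact Kc.isPreconnected.subset_connectedComponentIn ⟨hp, hlt⟩ (fun q hq => hq.1)
    · right
      apply Subset.antisymm
      · have := hpre.subset_right_of_subset_union oU oV dUV (fun q hq => cov q (hsub hq))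
          ⟨p, hmem, hlt⟩
        exact fun q hq => ⟨hsub hq, this hq⟩
      · exact Bc.isPreconnected.subset_connectedComponentIn ⟨hp, hlt⟩ (fun q hq => hq.1)
end

section
/- Let λ ≤ 0 and h ∈ ℝ, and let C = {(x,y) ∈ ℝ² : x² − y³ + λy = h}. Then C is nonempty, connected, and unbounded. -/
/-- For `λ ≤ 0`, every level curve `{x² − y³ + λy = h}` of the standard parabolic
Hamiltonian is nonempty, connected and unbounded. -/
theorem level_curve_lambda_nonpos (lam h : ℝ) (hlam : lam ≤ 0) :
    ({p : ℝ × ℝ | p.1 ^ 2 - p.2 ^ 3 + lam * p.2 = h}).Nonempty ∧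
    IsConnected {p : ℝ × ℝ | p.1 ^ 2 - p.2 ^ 3 + lam * p.2 = h} ∧
    ¬ Bornology.IsBounded {p : ℝ × ℝ | p.1 ^ 2 - p.2 ^ 3 + lam * p.2 = h} := by
  let g : ℝ → ℝ := fun y => y ^ 3 - lam * y
  have gc : Continuous g := by fun_prop
  have gm : StrictMono g := by
    intro a b hab
    have h1 : a ^ 3 < b ^ 3 := (Odd.strictMono_pow (by decide)) hab
    have h2 : lam * b ≤ lam * a := mul_le_mul_of_nonpos_left hab.le hlam
    simp only [g]
    linarith
  have gs : Function.Surjective g := by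
    intro c
    have h0 := abs_nonneg c
    have h1 : lam * (1 + |c|) ≤ 0 := mul_nonpos_of_nonpos_of_nonneg hlam (by positivity)
    have h2 : |c| ≤ (1 + |c|) ^ 3 := by nlinarith [pow_nonneg h0 3, pow_nonneg h0 2]
    have := mem_range_of_exists_le_of_exists_ge (c := c) gc
      ⟨-(1 + |c|), by simp only [g]; nlinarith [neg_abs_le c]⟩
      ⟨1 + |c|, by simp only [g]; linarith [le_abs_self c]⟩
    exact this
  let e := gm.orderIsoOfSurjective g gs
  have he : ∀ y, e y = g y := fun y => rfl
  let F : ℝ → ℝ × ℝ := fun x => (x, e.symm (x ^ 2 - h))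
  have Fc : Continuous F := by
    have := e.symm.continuous
    exact continuous_id.prodMk (this.comp (by fun_prop))
  have hC : {p : ℝ × ℝ | p.1 ^ 2 - p.2 ^ 3 + lam * p.2 = h} = Set.range F := by
    ext ⟨x, y⟩
    simp only [Set.mem_setOf_eq, Set.mem_range, F, Prod.mk.injEq]
    constructor
    · intro hp
      refine ⟨x, rfl, ?_⟩
      rw [OrderIso.symm_apply_eq, he]
      simp only [g]
      linarith
    · rintro ⟨z, rfl, hy⟩
      rw [OrderIso.symm_apply_eq, he] at hy
      simp only [g] at hy
      linarith
  rw [hC]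
  refine ⟨Set.range_nonempty F, isConnected_range Fc, fun hb => ?_⟩
  obtain ⟨R, hR⟩ := hb.exists_norm_le
  have h1 := (norm_fst_le _).trans (hR _ ⟨|R| + 1, rfl⟩)
  have h2 : ‖|R| + 1‖ ≤ R := h1
  rw [Real.norm_eq_abs] at h2
  linarith [le_abs_self R, le_abs_self (|R| + 1)]
end

section
/- Let λ > 0 and h ∈ ℝ satisfy 27h² > 4λ³, and let C = {(x,y) ∈ ℝ² : x² − y³ + λy = h}. Then C is nonempty, connected, and unbounded. -/
/-- For `λ > 0` and `27h² > 4λ³` (outside the swallow-tail region), the level curve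
`{x² − y³ + λy = h}` is nonempty, connected and unbounded. -/
theorem level_curve_outside_swallowtail (lam h : ℝ) (hlam : 0 < lam)
    (hh : 27 * h ^ 2 > 4 * lam ^ 3) :
    ({p : ℝ × ℝ | p.1 ^ 2 - p.2 ^ 3 + lam * p.2 = h}).Nonempty ∧
    IsConnected {p : ℝ × ℝ | p.1 ^ 2 - p.2 ^ 3 + lam * p.2 = h} ∧
    ¬ Bornology.IsBounded {p : ℝ × ℝ | p.1 ^ 2 - p.2 ^ 3 + lam * p.2 = h} := by
  obtain ⟨a, ha⟩ : ∃ a : ℝ, a ^ 3 - lam * a + h = 0 := by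
    have hc : Continuous (fun y : ℝ => y ^ 3 - lam * y + h) := by fun_prop
    obtain ⟨M, hM⟩ : ∃ M : ℝ, M = 1 + lam + |h| := ⟨_, rfl⟩
    have h0 := abs_nonneg h
    have h1 : M ≥ 1 := by linarith
    have h2 : M ^ 2 - lam ≥ 1 + |h| := by nlinarith
    have h3 : M * (M ^ 2 - lam) ≥ 1 + |h| := by nlinarith
    have h4 := le_abs_self h
    have h5 := neg_abs_le h
    have := intermediate_value_univ (-M) M hc
    obtain ⟨a, ha⟩ := this (show (0:ℝ) ∈ _ by
      constructor
      · show (-M) ^ 3 - lam * (-M) + h ≤ 0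
        nlinarith
      · show 0 ≤ M ^ 3 - lam * M + h
        nlinarith)
    exact ⟨a, ha⟩
  have hq : 4 * lam < 3 * a ^ 2 := by
    have e : h = lam * a - a ^ 3 := by linarith
    have e2 : 27 * h ^ 2 - 4 * lam ^ 3 = (3 * a ^ 2 - 4 * lam) * (3 * a ^ 2 - lam) ^ 2 := by
      rw [e]; ring
    by_contra hcon
    have := mul_nonneg (show 0 ≤ 4 * lam - 3 * a ^ 2 by linarith) (sq_nonneg (3 * a ^ 2 - lam))
    linarith
  have hfac : ∀ y : ℝ, y ^ 3 - lam * y + h = (y - a) * (y ^ 2 + y * a + a ^ 2 - lam) := by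
    intro y; linear_combination ha
  have hpos : ∀ y : ℝ, 0 < y ^ 2 + y * a + a ^ 2 - lam := by
    intro y; nlinarith [sq_nonneg (2 * y + a)]
  have hg : ∀ y : ℝ, a ≤ y → 0 ≤ y ^ 3 - lam * y + h := by
    intro y hy; rw [hfac]; exact mul_nonneg (by linarith) (hpos y).le
  have hmem : ∀ y : ℝ, a ≤ y → Real.sqrt (y ^ 3 - lam * y + h) ^ 2 - y ^ 3 + lam * y = h := by
    intro y hy; rw [Real.sq_sqrt (hg y hy)]; ring
  have heq : {p : ℝ × ℝ | p.1 ^ 2 - p.2 ^ 3 + lam * p.2 = h} =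
      (fun y : ℝ => (Real.sqrt (y ^ 3 - lam * y + h), y)) '' Set.Ici a ∪
      (fun y : ℝ => (-Real.sqrt (y ^ 3 - lam * y + h), y)) '' Set.Ici a := by
    ext ⟨x, y⟩
    constructor
    · intro hp
      have hp' : x ^ 2 - y ^ 3 + lam * y = h := hp
      have hx : y ^ 3 - lam * y + h = x ^ 2 := by linarith
      have hy : a ≤ y := by
        by_contra hcon
        have := mul_pos (show 0 < a - y by linarith) (hpos y)
        nlinarith [hfac y, sq_nonneg x]
      rcases le_total 0 x with h0 | h0
      · left
        refine ⟨y, hy, ?_⟩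
        simp only [hx, Real.sqrt_sq h0]
      · right
        refine ⟨y, hy, ?_⟩
        simp only [hx, Real.sqrt_sq_eq_abs, abs_of_nonpos h0, neg_neg]
    · rintro (⟨z, hz, hzz⟩ | ⟨z, hz, hzz⟩)
      · rw [← hzz]; exact hmem z hz
      · rw [← hzz]
        show (-Real.sqrt (z ^ 3 - lam * z + h)) ^ 2 - z ^ 3 + lam * z = h
        rw [neg_sq]; exact hmem z hz
  have hconn : IsConnected {p : ℝ × ℝ | p.1 ^ 2 - p.2 ^ 3 + lam * p.2 = h} := by
    rw [heq]
    apply IsConnected.union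
    · refine ⟨(0, a), ⟨a, Set.self_mem_Ici, ?_⟩, ⟨a, Set.self_mem_Ici, ?_⟩⟩ <;> simp [ha]
    · exact isConnected_Ici.image _ (by fun_prop)
    · exact isConnected_Ici.image _ (by fun_prop)
  refine ⟨hconn.nonempty, hconn, ?_⟩
  intro hb
  have hb2 := hb.image_snd
  have hsub : Set.Ici a ⊆ Prod.snd '' {p : ℝ × ℝ | p.1 ^ 2 - p.2 ^ 3 + lam * p.2 = h} :=
    fun y hy => ⟨(Real.sqrt (y ^ 3 - lam * y + h), y), hmem y hy, rfl⟩
  exact not_bddAbove_Ici a (hb2.subset hsub).bddAbove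
end
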